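/- Let k, D ≥ 1, let (Z,S) be an aperiodic zero-dimensional ℤ^k-system, and let π: X → Z be a factor map from a ℤ^k-system (X,T) with mdim(X) < D/2. Then the set of continuous maps f: X → [0,1]^D for which the map (I_f, π): X → ([0,1]^D)^{ℤ^k} × Z, x ↦ ((f(T^n x))_{n∈ℤ^k}, π(x)), is a topological embedding is a dense G_δ subset of C(X,[0,1]^D) with the uniform topology. -/

import Mathlib

/-! The argument is a Baire category one. By compactness `(I_f, π)` is an embedding iff it is
injective, i.e. iff for every `ε = 1 / (m + 1)` its fibres have diameter `< ε`. The maps `f` with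
this property at scale `ε` form an open set (`isOpen_epsEmbedding`), so everything rests on their
density (`exists_perturbation`).

Fix `f`, `δ` and `ε`. Since `mdim X < D / 2`, there are a block size `N` and a continuous map `F`
of `X` into a polyhedron of dimension `n < D N^k / 2` whose fibres are `ε`-small along the block
`{0, …, N-1}^k` (`exists_block_map`).

As `Z` is free and zero-dimensional, it has a clopen marker set `C` whose visits along each orbit
are separated by, and dense at, a large scale `R` (`exists_marker`). The Voronoi cells of the
visits tile `ℤ^k`, and the tiling depends on `z ∈ Z` in a locally constant way
(`eventually_markers_eq`). The cells are convex and contain a ball of large radius `ρ`. Comparing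
volumes, the number of `N`-boxes meeting a closed cell, times `N^k`, is at most `1 + o(1)` times the
number of lattice points of the open cell (`card_boxes_le`); so if `G` is the set of these boxes
and `Ω` is the open cell, then `2 |G| n < |Ω| D` (`exists_radius`).

This is the inequality required by general position: the `Ω`-segment of the `f`-orbit, a map
`X → [0,1]^(Ω × D)`, nearly factors through the product of the maps `F` over the boxes of `G`, which
takes values in a polyhedron of dimension `|G| n`. A generic affine perturbation of the factored
map is injective on the polyhedron (`dense_injective_perturb`; the exceptional matrices have too
small a Hausdorff dimension), so the perturbed segment determines the point up to `ε` at all times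
in the closed cell (`exists_tile_map`). Placing the perturbed segments on the open cells, and
keeping `f` at times outside of them, gives a continuous `g` near `f` (`exists_glued_map`). If
`π x = π y` and the `g`-orbits of `x` and `y` agree, then both points have the same tiling, time `0`
lies in some closed cell, and `dist x y < ε` follows. -/

open Set Filter
open scoped NNReal ENNReal Topology

/-- A continuous action of `ℤ^k` on a topological space. -/
structure IsZkAction {k : ℕ} {X : Type*} [TopologicalSpace X]
    (T : (Fin k → ℤ) → X → X) : Prop where
  cont : ∀ n, Continuous (T n)
  map_zero : ∀ x, T 0 x = x
  map_add : ∀ m n x, T (m + n) x = T m (T n x)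

/-- The marker property for a `ℤ^k`-action. -/
def MarkerProperty {k : ℕ} {X : Type*} [TopologicalSpace X]
    (T : (Fin k → ℤ) → X → X) : Prop :=
  ∀ F : Finset (Fin k → ℤ), ∃ U : Set X, IsOpen U ∧
    (⋃ n : Fin k → ℤ, T n '' U) = Set.univ ∧
    ∀ n ∈ F, n ≠ 0 → U ∩ T n '' U = ∅

/-- `f` is an `ε`-embedding with respect to the (pseudo-)distance `ρ`:
every fiber of `f` has `ρ`-diameter `< ε`. -/
def IsEpsEmbedding {X Y : Type*} [TopologicalSpace X] [TopologicalSpace Y]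
    (ρ : X → X → ℝ) (ε : ℝ) (f : X → Y) : Prop :=
  Continuous f ∧ ∀ x y, f x = f y → ρ x y < ε

/-- `widim_ε(X, ρ)`: the least `n` such that there is an `ε`-embedding of `X`
into a finite simplicial complex of dimension at most `n`. -/
noncomputable def widim (X : Type*) [TopologicalSpace X] (ρ : X → X → ℝ) (ε : ℝ) : ℕ :=
  sInf {n : ℕ | ∃ (m : ℕ) (P : Geometry.SimplicialComplex ℝ (EuclideanSpace ℝ (Fin m))),
    P.faces.Finite ∧ (∀ s ∈ P.faces, s.card ≤ n + 1) ∧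
    ∃ f : X → P.space, IsEpsEmbedding ρ ε f}

/-- The distance `ρ_{[N]}(x,y) = sup_{a ∈ {0,…,N-1}^k} ρ(T^a x, T^a y)`. -/
noncomputable def blockRho {k : ℕ} {X : Type*} (T : (Fin k → ℤ) → X → X)
    (ρ : X → X → ℝ) (N : ℕ) (x y : X) : ℝ :=
  ⨆ a : Fin k → Fin N, ρ (T (fun i => (a i : ℤ)) x) (T (fun i => (a i : ℤ)) y)

/-- Mean dimension of a `ℤ^k`-system:
`mdim(X) = lim_{ε→0} lim_{N→∞} widim_ε(X, d_{[N]})/N^k`, where the limit in `N`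
equals the infimum (subadditivity) and the limit in `ε` equals the supremum
(monotonicity). -/
noncomputable def mdim {k : ℕ} (X : Type*) [MetricSpace X]
    (T : (Fin k → ℤ) → X → X) : ℝ≥0∞ :=
  ⨆ (ε : ℝ) (_ : 0 < ε), ⨅ (N : ℕ) (_ : 1 ≤ N),
    (widim X (blockRho T dist N) ε : ℝ≥0∞) / (N : ℝ≥0∞) ^ k

/-! ### General position -/

/-- Generic affine perturbation: if `G` is `C¹` and the points `p`, `q` range over countably many
affine images of a space `V` with `2 dim V < card ι`, then for a dense set of matrices `A` (with
columns `A l`) the map `p ↦ G p + A p` is injective on these points. For `p ≠ q` differing in the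
coordinate `j`, a collision determines the column `A j` from `p`, `q` and the other columns, so
the bad matrices form a set of Hausdorff dimension at most
`2 dim V + (card κ - 1) card ι < card κ * card ι`. -/
lemma dense_injective_perturb {κ ι σ V : Type*} [Fintype κ] [Fintype ι] [Countable σ]
    [NormedAddCommGroup V] [NormedSpace ℝ V] [FiniteDimensional ℝ V]
    (φ : σ → V →ᵃ[ℝ] (κ → ℝ)) (G : (κ → ℝ) → (ι → ℝ)) (hG : ContDiff ℝ 1 G)
    (hdim : 2 * Module.finrank ℝ V < Fintype.card ι) :
    Dense {A : κ → ι → ℝ | ∀ p ∈ ⋃ s, range (φ s), ∀ q ∈ ⋃ s, range (φ s),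
      G p + ∑ l, p l • A l = G q + ∑ l, q l • A l → p = q} := by
  classical
  rcases isEmpty_or_nonempty κ with hκ | hκ
  · convert dense_univ
    ext A
    simp only [mem_ofPred_eq, mem_univ, iff_true]
    intro p _ q _ _
    exact Subsingleton.elim _ _
  let Ψ : σ → σ → (j : κ) → V × V × ({l : κ // l ≠ j} → ι → ℝ) → κ → ι → ℝ :=
    fun s t j w l => if h : l ≠ j then w.2.2 ⟨l, h⟩ else
      (φ s w.1 j - φ t w.2.1 j)⁻¹ • (G (φ t w.2.1) - G (φ s w.1) -
        ∑ l : {l : κ // l ≠ j}, (φ s w.1 l - φ t w.2.1 l) • w.2.2 l)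
  let U : σ → σ → (j : κ) → Set (V × V × ({l : κ // l ≠ j} → ι → ℝ)) :=
    fun s t j => {w | 0 < φ s w.1 j - φ t w.2.1 j}
  have hφ : ∀ s, ContDiff ℝ 1 (φ s) := fun s =>
    (ContinuousAffineMap.mk (φ s) (φ s).continuous_of_finiteDimensional).contDiff
  have hconv : ∀ s t j, Convex ℝ (U s t j) := by
    intro s t j
    let L : (V × V × ({l : κ // l ≠ j} → ι → ℝ)) →ᵃ[ℝ] ℝ :=
      (LinearMap.proj (R := ℝ) (φ := fun _ : κ => ℝ) j).toAffineMap.comp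
        ((φ s).comp (LinearMap.fst ℝ V _).toAffineMap) -
      (LinearMap.proj (R := ℝ) (φ := fun _ : κ => ℝ) j).toAffineMap.comp
        ((φ t).comp ((LinearMap.fst ℝ V _).comp (LinearMap.snd ℝ V _)).toAffineMap)
    exact (convex_Ioi (0 : ℝ)).affine_preimage L
  have hΨ : ∀ s t j, ContDiffOn ℝ 1 (Ψ s t j) (U s t j) := by
    intro s t j
    have h1 : ContDiff ℝ 1 (fun w : V × V × ({l : κ // l ≠ j} → ι → ℝ) => φ s w.1) :=
      (hφ s).comp contDiff_fst
    have h2 : ContDiff ℝ 1 (fun w : V × V × ({l : κ // l ≠ j} → ι → ℝ) => φ t w.2.1) :=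
      (hφ t).comp (contDiff_fst.comp contDiff_snd)
    have h3 : ∀ l, ContDiff ℝ 1 (fun w : V × V × ({l : κ // l ≠ j} → ι → ℝ) => w.2.2 l) :=
      fun l => (contDiff_apply ℝ (ι → ℝ) l).comp (contDiff_snd.comp contDiff_snd)
    have h1' := fun l => (contDiff_apply ℝ ℝ l).comp h1
    have h2' := fun l => (contDiff_apply ℝ ℝ l).comp h2
    rw [contDiffOn_pi]
    intro l
    by_cases h : l ≠ j
    · simp only [Ψ, h, ne_eq, not_false_eq_true, dite_true]
      exact (h3 _).contDiffOn
    · simp only [Ψ, h, dite_false]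
      refine ContDiffOn.smul (ContDiffOn.inv ((h1' j).sub (h2' j)).contDiffOn ?_) ?_
      · intro w hw
        exact (show 0 < φ s w.1 j - φ t w.2.1 j from hw).ne'
      · refine (((hG.comp h2).sub (hG.comp h1)).sub ?_).contDiffOn
        exact ContDiff.sum fun l _ => ((h1' l).sub (h2' l)).smul (h3 l)
  let Bad : Set (κ → ι → ℝ) := ⋃ s, ⋃ t, ⋃ j, Ψ s t j '' U s t j
  have hBad : dimH Bad < Module.finrank ℝ (κ → ι → ℝ) := by
    have hle : dimH Bad ≤
        ((2 * Module.finrank ℝ V + (Fintype.card κ - 1) * Fintype.card ι : ℕ) : ℝ≥0∞) := by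
      simp only [Bad, dimH_iUnion]
      refine iSup_le fun s => iSup_le fun t => iSup_le fun j => ?_
      refine ((hΨ s t j).dimH_image_le (hconv s t j) Subset.rfl).trans ?_
      refine (dimH_mono (subset_univ _)).trans ?_
      rw [Real.dimH_univ_eq_finrank]
      have : Module.finrank ℝ (V × V × ({l : κ // l ≠ j} → ι → ℝ)) =
          2 * Module.finrank ℝ V + (Fintype.card κ - 1) * Fintype.card ι := by
        rw [Module.finrank_prod, Module.finrank_prod, Module.finrank_pi_fintype]
        simp only [Module.finrank_fintype_fun_eq_card, Finset.sum_const, Finset.card_univ,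
          smul_eq_mul]
        rw [Fintype.card_subtype_compl, Fintype.card_subtype_eq]
        ring
      rw [this]
    refine hle.trans_lt ?_
    rw [Module.finrank_pi_fintype]
    simp only [Module.finrank_fintype_fun_eq_card, Finset.sum_const, Finset.card_univ,
      smul_eq_mul]
    rw [Nat.cast_lt]
    obtain ⟨c, hc⟩ : ∃ c, Fintype.card κ = c + 1 :=
      Nat.exists_eq_succ_of_ne_zero Fintype.card_ne_zero
    rw [hc, Nat.add_sub_cancel]
    nlinarith
  refine (dense_compl_of_dimH_lt_finrank hBad).mono ?_
  intro A hA
  -- a collision between points with `q j < p j` puts `A` into the bad set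
  have key : ∀ s t v v', G (φ s v) + ∑ l, φ s v l • A l = G (φ t v') + ∑ l, φ t v' l • A l →
      ∀ j, ¬ (0 < φ s v j - φ t v' j) := by
    intro s t v v' heq j hj
    refine hA ?_
    simp only [Bad, mem_iUnion]
    refine ⟨s, t, j, (v, v', fun l => A l), hj, ?_⟩
    funext l
    by_cases h : l ≠ j
    · simp only [Ψ, h, ne_eq, not_false_eq_true, dite_true]
    · simp only [Ψ, h, dite_false]
      push Not at h
      subst h
      rw [inv_smul_eq_iff₀ hj.ne']
      have e1 : ∑ l', (φ s v l' - φ t v' l') • A l' =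
          (φ s v l - φ t v' l) • A l +
          ∑ l' : {l' : κ // l' ≠ l}, (φ s v l' - φ t v' l') • A l' := by
        rw [Fintype.sum_eq_add_sum_subtype_ne _ l]
      have e2 : ∑ l', (φ s v l' - φ t v' l') • A l' = G (φ t v') - G (φ s v) := by
        simp only [sub_smul, Finset.sum_sub_distrib]
        rw [sub_eq_sub_iff_add_eq_add, add_comm, heq, add_comm]
      rw [← e2, e1]
      abel
  intro p hp q hq heq
  obtain ⟨s, v, rfl⟩ := mem_iUnion.1 hp
  obtain ⟨t, v', rfl⟩ := mem_iUnion.1 hq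
  funext j
  have a1 := key s t v v' heq j
  have a2 := key t s v' v heq.symm j
  linarith

/-- A continuous map `h : X → [0,1]^ι` that nearly factors through `F` (it varies by less than `δ`
on the fibres of `F`) is approximated by `G ∘ F` with `G` smooth. The values of `G ∘ F` are kept
`δ / 2` away from the boundary of the cube, to leave room for a perturbation. -/
lemma exists_smooth_factor {X κ ι : Type*} [TopologicalSpace X] [CompactSpace X]
    [Fintype κ] [Fintype ι] (F : X → κ → ℝ) (hF : Continuous F) (h : X → ι → ℝ)
    (hh : Continuous h) (h01 : ∀ x i, h x i ∈ Icc (0 : ℝ) 1) (δ : ℝ) (hδ : 0 < δ) (hδ1 : δ ≤ 1)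
    (hFh : ∀ x y, F x = F y → ∀ i, |h x i - h y i| < δ) :
    ∃ G : (κ → ℝ) → (ι → ℝ), ContDiff ℝ 1 G ∧
      ∀ x i, |G (F x) i - h x i| < 3 / 2 * δ ∧ G (F x) i ∈ Icc (δ / 2) (1 - δ / 2) := by
  let h' : X → ι → ℝ := fun x i => (1 - δ) * h x i + δ / 2
  have hh' : Continuous h' := by
    refine continuous_pi fun i => ?_
    have := (continuous_apply i).comp hh
    exact (continuous_const.mul this).add continuous_const
  have h'01 : ∀ x i, h' x i ∈ Icc (δ / 2) (1 - δ / 2) := by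
    intro x i
    have h1 := h01 x i
    constructor <;> simp only [h'] <;> nlinarith [h1.1, h1.2]
  have h'h : ∀ x i, |h' x i - h x i| ≤ δ / 2 := by
    intro x i
    have h1 := h01 x i
    rw [abs_le]
    constructor <;> simp only [h'] <;> nlinarith [h1.1, h1.2]
  have hFh' : ∀ x y, F x = F y → ∀ i, |h' x i - h' y i| < δ := by
    intro x y e i
    have h1 := hFh x y e i
    have : h' x i - h' y i = (1 - δ) * (h x i - h y i) := by simp only [h']; ring
    rw [this, abs_mul, abs_of_nonneg (by linarith)]
    nlinarith [abs_nonneg (h x i - h y i)]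
  let t : (κ → ℝ) → Set (ι → ℝ) := fun p =>
    {v | ∀ x, F x = p → ∀ i, v i ∈ Ioo (h' x i - δ) (h' x i + δ) ∩ Icc (δ / 2) (1 - δ / 2)}
  have ht : ∀ p, Convex ℝ (t p) := by
    intro p v hv w hw a b ha hb hab x hx i
    exact ((convex_Ioo _ _).inter (convex_Icc _ _)) (hv x hx i) (hw x hx i) ha hb hab
  have hloc : ∀ p, ∃ c, ∀ᶠ q in 𝓝 p, c ∈ t q := by
    intro p
    by_cases hp : ∃ x, F x = p
    · obtain ⟨x₀, hx₀⟩ := hp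
      refine ⟨h' x₀, ?_⟩
      -- the points where `h'` is `δ`-far from `h' x₀` form a compact set missing the fibre over `p`
      let C : Set X := ⋃ i, {x | δ ≤ |h' x i - h' x₀ i|}
      have hC : IsClosed C := by
        refine isClosed_iUnion_of_finite fun i => isClosed_le continuous_const ?_
        exact (((continuous_apply i).comp hh').sub continuous_const).abs
      have hFC : IsClosed (F '' C) := (hC.isCompact.image hF).isClosed
      have hpC : p ∈ (F '' C)ᶜ := by
        rintro ⟨x, hx, hxp⟩
        obtain ⟨i, hi⟩ := mem_iUnion.1 hx
        exact absurd (hFh' x x₀ (hxp.trans hx₀.symm) i) (not_lt.2 hi)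
      filter_upwards [hFC.isOpen_compl.mem_nhds hpC] with q hq x hx i
      refine ⟨?_, h'01 x₀ i⟩
      have : x ∉ C := fun hxC => hq ⟨x, hxC, hx⟩
      have h2 : |h' x i - h' x₀ i| < δ := by
        by_contra hcon
        exact this (mem_iUnion.2 ⟨i, not_lt.1 hcon⟩)
      rw [abs_lt] at h2
      constructor <;> linarith
    · refine ⟨0, ?_⟩
      have hcl : IsClosed (range F) := (isCompact_range hF).isClosed
      filter_upwards [hcl.isOpen_compl.mem_nhds (show p ∈ (range F)ᶜ from hp)] with q hq x hx
      exact absurd ⟨x, hx⟩ hq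
  obtain ⟨g, hg⟩ := exists_contMDiffMap_forall_mem_convex_of_local_const (n := 1)
    (modelWithCornersSelf ℝ (κ → ℝ)) ht hloc
  refine ⟨g, g.contMDiff.contDiff, fun x i => ?_⟩
  obtain ⟨⟨h1, h2⟩, h3⟩ := hg (F x) x rfl i
  refine ⟨?_, h3⟩
  have h4 := abs_le.1 (h'h x i)
  rw [abs_lt]
  constructor <;> linarith [h4.1, h4.2]

/-- A map `h : X → [0,1]^ι` that nearly factors through `F`, where `F` takes values in countably
many affine pieces of dimension less than `card ι / 2`, is close to a map `g : X → [0,1]^ι`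
through whose values those of `F` are determined. -/
lemma exists_generic_approx {X κ ι σ V : Type*} [TopologicalSpace X] [CompactSpace X]
    [Fintype κ] [Fintype ι] [Countable σ]
    [NormedAddCommGroup V] [NormedSpace ℝ V] [FiniteDimensional ℝ V]
    (φ : σ → V →ᵃ[ℝ] (κ → ℝ)) (hdim : 2 * Module.finrank ℝ V < Fintype.card ι)
    (F : X → κ → ℝ) (hF : Continuous F) (hFφ : ∀ x, F x ∈ ⋃ s, range (φ s))
    (h : X → ι → ℝ) (hh : Continuous h) (h01 : ∀ x i, h x i ∈ Icc (0 : ℝ) 1)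
    (δ : ℝ) (hδ : 0 < δ) (hδ1 : δ ≤ 1)
    (hFh : ∀ x y, F x = F y → ∀ i, |h x i - h y i| < δ) :
    ∃ g : X → ι → ℝ, Continuous g ∧ (∀ x i, g x i ∈ Icc (0 : ℝ) 1) ∧
      (∀ x i, |g x i - h x i| < 2 * δ) ∧ ∀ x y, g x = g y → F x = F y := by
  obtain ⟨G, hG, hGF⟩ := exists_smooth_factor F hF h hh h01 δ hδ hδ1 hFh
  -- matrices whose contribution along `F` stays below `δ / 2` form a neighbourhood of `0`
  obtain ⟨R, hR⟩ : ∃ R, ∀ x l, |F x l| ≤ R := by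
    obtain ⟨R, hR⟩ := (isCompact_range hF).isBounded.exists_norm_le
    exact ⟨R, fun x l => (norm_le_pi_norm (F x) l).trans (hR _ ⟨x, rfl⟩)⟩
  set c : ℝ := δ / 2 / (Fintype.card κ * (|R| + 1) + 1) with hc
  have hden : (0 : ℝ) < Fintype.card κ * (|R| + 1) + 1 := by positivity
  have hc0 : 0 < c := by positivity
  obtain ⟨A, hA, hAc⟩ := (dense_injective_perturb φ G hG hdim).exists_dist_lt 0 hc0
  have hAc' : ∀ l i, |A l i| ≤ c := by
    intro l i
    rw [dist_comm, dist_zero_right] at hAc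
    exact ((norm_le_pi_norm (A l) i).trans (norm_le_pi_norm A l)).trans hAc.le
  have hsmall : ∀ x i, |(∑ l, F x l • A l) i| < δ / 2 := by
    intro x i
    rw [Finset.sum_apply]
    calc |∑ l, (F x l • A l) i| ≤ ∑ l, |(F x l • A l) i| := Finset.abs_sum_le_sum_abs _ _
      _ ≤ ∑ _l : κ, (|R| + 1) * c := by
        refine Finset.sum_le_sum fun l _ => ?_
        rw [Pi.smul_apply, smul_eq_mul, abs_mul]
        refine mul_le_mul ?_ (hAc' l i) (abs_nonneg _) (by positivity)
        linarith [hR x l, le_abs_self R]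
      _ = Fintype.card κ * (|R| + 1) * c := by
        rw [Finset.sum_const, Finset.card_univ, nsmul_eq_mul]; ring
      _ < (Fintype.card κ * (|R| + 1) + 1) * c := by linarith
      _ = δ / 2 := by rw [hc]; field_simp
  refine ⟨fun x => G (F x) + ∑ l, F x l • A l, ?_, ?_, ?_, ?_⟩
  · refine (hG.continuous.comp hF).add (continuous_finsetSum _ fun l _ => ?_)
    exact ((continuous_apply l).comp hF).smul continuous_const
  · intro x i
    have h1 := abs_lt.1 (hsmall x i)
    have h2 := (hGF x i).2
    change G (F x) i + (∑ l, F x l • A l) i ∈ Icc (0 : ℝ) 1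
    constructor <;> linarith [h1.1, h1.2, h2.1, h2.2]
  · intro x i
    have h1 := abs_lt.1 (hsmall x i)
    have h2 := abs_lt.1 (hGF x i).1
    change |G (F x) i + (∑ l, F x l • A l) i - h x i| < 2 * δ
    rw [abs_lt]
    constructor <;> linarith [h1.1, h1.2, h2.1, h2.2]
  · intro x y e
    exact hA _ (hFφ x) _ (hFφ y) e

/-! ### Small-fibre maps from mean dimension -/

/-- The map into a full simplex whose barycentric coordinates at all vertices but one are the
given functions `u · j`. -/
lemma exists_map_simplex {X J : Type*} [TopologicalSpace X] [Fintype J]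
    (u : X → J → ℝ) (hu : Continuous u) (hu0 : ∀ x j, 0 ≤ u x j) (hu1 : ∀ x, ∑ j, u x j ≤ 1) :
    ∃ (m : ℕ) (P : Geometry.SimplicialComplex ℝ (EuclideanSpace ℝ (Fin m))),
      P.faces.Finite ∧ (∀ s ∈ P.faces, s.card ≤ m + 1) ∧
      ∃ f : X → P.space, Continuous f ∧ ∀ x y, f x = f y → u x = u y := by
  classical
  let e := Fintype.equivFin (Option J)
  set m := Fintype.card (Option J) with hm
  let v : Fin m → EuclideanSpace ℝ (Fin m) := fun i => EuclideanSpace.single i 1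
  have hv : AffineIndependent ℝ v := by
    have := (EuclideanSpace.basisFun (Fin m) ℝ).orthonormal.linearIndependent
    have h1 : v = EuclideanSpace.basisFun (Fin m) ℝ := by
      funext i
      simp [v]
    have h2 : LinearIndependent ℝ v := by
      rw [h1]
      exact this
    exact h2.affineIndependent
  let K : PreAbstractSimplicialComplex (EuclideanSpace ℝ (Fin m)) :=
    { faces := {s | s.Nonempty ∧ s ⊆ Finset.univ.image v}
      isRelLowerSet_faces := by
        intro s hs
        exact ⟨hs.1, fun t hts ht => ⟨ht, hts.trans hs.2⟩⟩ }
  let P : Geometry.SimplicialComplex ℝ (EuclideanSpace ℝ (Fin m)) :=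
    Geometry.SimplicialComplex.ofAffineIndependent K (by
      refine hv.range.mono ?_
      refine iUnion₂_subset fun s hs y hy => ?_
      obtain ⟨i, -, hi⟩ := Finset.mem_image.1 (hs.2 hy)
      exact ⟨i, hi⟩)
  have hP : P.faces = {s | s.Nonempty ∧ s ⊆ Finset.univ.image v} := rfl
  let w : X → Option J → ℝ := fun x o => o.elim (1 - ∑ j, u x j) (u x)
  have hw0 : ∀ x o, 0 ≤ w x o := by
    intro x o
    cases o with
    | none => simpa [w] using hu1 x
    | some j => exact hu0 x j
  have hw1 : ∀ x, ∑ o, w x o = 1 := by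
    intro x
    rw [Fintype.sum_option]
    simp [w]
  have hwc : Continuous w := by
    refine continuous_pi fun o => ?_
    have hu' : ∀ j, Continuous fun x => u x j := fun j => (continuous_apply j).comp hu
    cases o with
    | none => exact continuous_const.sub (continuous_finsetSum _ fun j _ => hu' j)
    | some j => exact hu' j
  let f : X → EuclideanSpace ℝ (Fin m) := fun x => WithLp.toLp 2 fun i => w x (e.symm i)
  have hfv : ∀ x, f x = ∑ i, w x (e.symm i) • v i := by
    intro x
    ext i
    simp only [WithLp.ofLp_sum, f, v, WithLp.ofLp_smul, Finset.sum_apply, Pi.smul_apply,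
      smul_eq_mul]
    simp [PiLp.single_apply]
  have hfP : ∀ x, f x ∈ P.space := by
    intro x
    have hface : Finset.univ.image v ∈ P.faces := by
      rw [hP]
      exact ⟨⟨v (e none), Finset.mem_image_of_mem _ (Finset.mem_univ _)⟩, Subset.rfl⟩
    refine Geometry.SimplicialComplex.convexHull_subset_space hface ?_
    rw [hfv]
    refine (convex_convexHull ℝ _).sum_mem (fun i _ => hw0 x _) ?_ fun i _ =>
      subset_convexHull ℝ _ (by simp)
    rw [← hw1 x]
    exact Equiv.sum_comp e.symm (w x)
  refine ⟨m, P, ?_, ?_, fun x => ⟨f x, hfP x⟩, ?_, ?_⟩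
  · rw [hP]
    refine (Finset.finite_toSet (Finset.univ.image v).powerset).subset ?_
    intro s hs
    exact Finset.mem_coe.2 (Finset.mem_powerset.2 hs.2)
  · intro s hs
    rw [hP] at hs
    refine (Finset.card_le_card hs.2).trans (Finset.card_image_le.trans ?_)
    simp
  · refine Continuous.subtype_mk ?_ _
    refine (PiLp.continuous_toLp 2 _).comp (continuous_pi fun i => ?_)
    exact (continuous_apply (e.symm i)).comp hwc
  · intro x y hxy
    have h1 : f x = f y := congrArg Subtype.val hxy
    funext j
    have h2 : (f x).ofLp (e (some j)) = (f y).ofLp (e (some j)) := by rw [h1]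
    simpa [f, w] using h2

lemma dist_lt_of_blockRho_lt {k : ℕ} {X : Type*} [MetricSpace X] (T : (Fin k → ℤ) → X → X)
    {N : ℕ} {ε : ℝ} {x y : X} (h : blockRho T dist N x y < ε) (a : Fin k → Fin N) :
    dist (T (fun i => (a i : ℤ)) x) (T (fun i => (a i : ℤ)) y) < ε :=
  (le_ciSup (f := fun a : Fin k → Fin N =>
    dist (T (fun i => (a i : ℤ)) x) (T (fun i => (a i : ℤ)) y))
    (Set.finite_range _).bddAbove a).trans_lt h

lemma blockRho_lt {k : ℕ} {X : Type*} [MetricSpace X] (T : (Fin k → ℤ) → X → X)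
    {N : ℕ} (hN : 1 ≤ N) {ε : ℝ} {x y : X}
    (h : ∀ a : Fin k → Fin N, dist (T (fun i => (a i : ℤ)) x) (T (fun i => (a i : ℤ)) y) < ε) :
    blockRho T dist N x y < ε := by
  have : Nonempty (Fin N) := ⟨⟨0, hN⟩⟩
  obtain ⟨a, ha⟩ := exists_eq_ciSup_of_finite (f := fun a : Fin k → Fin N =>
    dist (T (fun i => (a i : ℤ)) x) (T (fun i => (a i : ℤ)) y))
  unfold blockRho
  rw [← ha]
  exact h a

/-- The infimum defining `widim` is over a nonempty set, hence attained: the scaled distances of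
the points `T a x`, `a ∈ [N]`, to a finite `ε / 2`-net are the barycentric coordinates of an
`ε`-embedding. -/
lemma widim_spec {k : ℕ} {X : Type*} [MetricSpace X] [CompactSpace X]
    (T : (Fin k → ℤ) → X → X) (hT : IsZkAction T) {N : ℕ} (hN : 1 ≤ N) {ε : ℝ} (hε : 0 < ε) :
    ∃ (m : ℕ) (P : Geometry.SimplicialComplex ℝ (EuclideanSpace ℝ (Fin m))),
      P.faces.Finite ∧ (∀ s ∈ P.faces, s.card ≤ widim X (blockRho T dist N) ε + 1) ∧
      ∃ f : X → P.space, IsEpsEmbedding (blockRho T dist N) ε f := by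
  refine Nat.sInf_mem (s := {n : ℕ | ∃ (m : ℕ)
    (P : Geometry.SimplicialComplex ℝ (EuclideanSpace ℝ (Fin m))),
    P.faces.Finite ∧ (∀ s ∈ P.faces, s.card ≤ n + 1) ∧
    ∃ f : X → P.space, IsEpsEmbedding (blockRho T dist N) ε f}) ?_
  obtain ⟨t, -, htf, ht⟩ := Metric.finite_approx_of_totallyBounded
    (isCompact_univ (X := X)).totallyBounded (ε / 2) (half_pos hε)
  have : Fintype t := htf.fintype
  let J := (Fin k → Fin N) × t
  set R := Metric.diam (univ : Set X) with hR
  have hdR : ∀ x y : X, dist x y ≤ R := fun x y =>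
    Metric.dist_le_diam_of_mem isCompact_univ.isBounded (mem_univ x) (mem_univ y)
  have hR0 : 0 ≤ R := Metric.diam_nonneg
  set c : ℝ := Fintype.card J * R + 1 with hc
  have hc0 : 0 < c := by positivity
  let u : X → J → ℝ := fun x j => dist (T (fun i => (j.1 i : ℤ)) x) j.2 / c
  have hu : Continuous u := continuous_pi fun j =>
    ((hT.cont _).dist continuous_const).div_const _
  have hu1 : ∀ x, ∑ j, u x j ≤ 1 := by
    intro x
    calc ∑ j, u x j ≤ ∑ _j : J, R / c := by
          refine Finset.sum_le_sum fun j _ => ?_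
          exact div_le_div_of_nonneg_right (hdR _ _) hc0.le
      _ = Fintype.card J * R / c := by
          rw [Finset.sum_const, Finset.card_univ, nsmul_eq_mul]; ring
      _ ≤ 1 := by rw [div_le_one hc0]; linarith
  obtain ⟨m, P, hfin, hcard, f, hf, hfu⟩ :=
    exists_map_simplex u hu (fun x j => by positivity) hu1
  refine ⟨m, m, P, hfin, hcard, f, hf, fun x y hxy => blockRho_lt T hN fun a => ?_⟩
  have hxy' := hfu x y hxy
  obtain ⟨p, hp, hxp⟩ := mem_iUnion₂.1 (ht (mem_univ (T (fun i => (a i : ℤ)) x)))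
  have h1 : u x (a, ⟨p, hp⟩) = u y (a, ⟨p, hp⟩) := by rw [hxy']
  have h2 : dist (T (fun i => (a i : ℤ)) x) p = dist (T (fun i => (a i : ℤ)) y) p := by
    simpa [u, div_left_inj' hc0.ne'] using h1
  rw [Metric.mem_ball] at hxp
  calc dist (T (fun i => (a i : ℤ)) x) (T (fun i => (a i : ℤ)) y)
      ≤ dist (T (fun i => (a i : ℤ)) x) p + dist (T (fun i => (a i : ℤ)) y) p :=
        dist_triangle_right _ _ _
    _ < ε := by rw [← h2]; linarith

/-- A simplex with at most `n + 1` vertices lies in the image of an affine map from `ℝ^n`. -/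
lemma exists_affine_cover {m n : ℕ} (s : Finset (EuclideanSpace ℝ (Fin m))) (hs : s.Nonempty)
    (hcard : s.card ≤ n + 1) :
    ∃ φ : (Fin n → ℝ) →ᵃ[ℝ] (Fin m → ℝ),
      ∀ p ∈ convexHull ℝ (s : Set (EuclideanSpace ℝ (Fin m))), p.ofLp ∈ range φ := by
  classical
  obtain ⟨s₀, hs₀⟩ := hs
  have hc : (s.erase s₀).card ≤ n := by
    rw [Finset.card_erase_of_mem hs₀]; omega
  let eqv := (s.erase s₀).equivFin
  let e : Fin n → EuclideanSpace ℝ (Fin m) := fun i =>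
    if h : (i : ℕ) < (s.erase s₀).card then (eqv.symm ⟨i, h⟩ : EuclideanSpace ℝ (Fin m)) else s₀
  let ψ : (Fin n → ℝ) →ᵃ[ℝ] EuclideanSpace ℝ (Fin m) :=
    (Fintype.linearCombination ℝ (fun i => e i - s₀)).toAffineMap + AffineMap.const ℝ _ s₀
  have hψ : ∀ v, ψ v = ∑ i, v i • (e i - s₀) + s₀ := by
    intro v
    simp [ψ, Fintype.linearCombination_apply]
  have hsub : convexHull ℝ (s : Set (EuclideanSpace ℝ (Fin m))) ⊆ range ψ := by
    refine convexHull_min ?_ ?_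
    · intro p hp
      by_cases hp0 : p = s₀
      · exact ⟨0, by rw [hψ]; simp [hp0]⟩
      · have hp' : p ∈ s.erase s₀ := Finset.mem_erase.2 ⟨hp0, hp⟩
        let i := eqv ⟨p, hp'⟩
        refine ⟨Pi.single ⟨i, i.2.trans_le hc⟩ 1, ?_⟩
        rw [hψ]
        simp only [Pi.single_apply, ite_smul, one_smul, zero_smul, Finset.sum_ite_eq',
          Finset.mem_univ, if_true]
        simp [e, i]
    · rw [← image_univ]
      exact convex_univ.affine_image ψ
  refine ⟨(WithLp.linearEquiv 2 ℝ (Fin m → ℝ)).toLinearMap.toAffineMap.comp ψ, ?_⟩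
  intro p hp
  obtain ⟨v, rfl⟩ := hsub hp
  exact ⟨v, rfl⟩

/-- At every scale `ε`, a system with `mdim X < D / 2` has a block size `N` and a continuous map
into finitely many affine pieces of dimension `n < D N^k / 2` whose fibres are `ε`-small along
the block `[N]`. -/
lemma exists_block_map {k D : ℕ} {X : Type*} [MetricSpace X] [CompactSpace X]
    (T : (Fin k → ℤ) → X → X) (hT : IsZkAction T) (hmdim : mdim X T < (D : ℝ≥0∞) / 2)
    {ε : ℝ} (hε : 0 < ε) :
    ∃ (N n m : ℕ) (σ : Type) (_ : Finite σ) (φ : σ → (Fin n → ℝ) →ᵃ[ℝ] (Fin m → ℝ))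
      (F : X → Fin m → ℝ), 1 ≤ N ∧ 2 * n < D * N ^ k ∧ Continuous F ∧
      (∀ x, F x ∈ ⋃ s, range (φ s)) ∧
      ∀ x y, F x = F y → ∀ a : Fin k → Fin N,
        dist (T (fun i => (a i : ℤ)) x) (T (fun i => (a i : ℤ)) y) < ε := by
  have h1 : ⨅ (N : ℕ) (_ : 1 ≤ N),
      (widim X (blockRho T dist N) ε : ℝ≥0∞) / (N : ℝ≥0∞) ^ k < (D : ℝ≥0∞) / 2 :=
    (le_iSup₂ (f := fun (ε : ℝ) (_ : 0 < ε) => ⨅ (N : ℕ) (_ : 1 ≤ N),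
      (widim X (blockRho T dist N) ε : ℝ≥0∞) / (N : ℝ≥0∞) ^ k) ε hε).trans_lt hmdim
  simp only [iInf_lt_iff] at h1
  obtain ⟨N, hN, h2⟩ := h1
  set n := widim X (blockRho T dist N) ε with hn
  have h3 : 2 * n < D * N ^ k := by
    have hNk : ((N : ℝ≥0∞) ^ k) ≠ 0 := pow_ne_zero _ (by exact_mod_cast (by omega : N ≠ 0))
    have hNk' : ((N : ℝ≥0∞) ^ k) ≠ ⊤ := ENNReal.pow_ne_top (ENNReal.natCast_ne_top N)
    rw [ENNReal.div_lt_iff (Or.inl hNk) (Or.inl hNk'), mul_comm, ← mul_div_assoc,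
      ENNReal.lt_div_iff_mul_lt (Or.inl (by norm_num)) (Or.inl (by norm_num))] at h2
    have : n * 2 < N ^ k * D := by exact_mod_cast h2
    linarith
  obtain ⟨m, P, hfin, hcard, f, hf, hfε⟩ := widim_spec T hT hN hε
  choose φ hφ using fun s : P.faces => exists_affine_cover s.1
    (Geometry.SimplicialComplex.nonempty_of_mem_faces s.2) (hcard s.1 s.2)
  refine ⟨N, n, m, P.faces, hfin.to_subtype, φ, fun x => (f x).1.ofLp, hN, h3, ?_, ?_, ?_⟩
  · exact (PiLp.continuous_ofLp 2 _).comp (continuous_subtype_val.comp hf)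
  · intro x
    obtain ⟨s, hs, hx⟩ := Geometry.SimplicialComplex.mem_space_iff.1 (f x).2
    exact mem_iUnion.2 ⟨⟨s, hs⟩, hφ ⟨s, hs⟩ _ hx⟩
  · intro x y hxy
    refine dist_lt_of_blockRho_lt T (hfε x y ?_)
    exact Subtype.ext (WithLp.ofLp_injective 2 hxy)

/-! ### Counting lattice points of convex cells -/

open scoped Pointwise

lemma volume_floor_mem {k : ℕ} (G : Finset (Fin k → ℤ)) {s : ℝ} (hs : 0 < s) :
    MeasureTheory.volume {x : Fin k → ℝ | (fun i => ⌊x i / s⌋) ∈ G} =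
      ENNReal.ofReal (G.card * s ^ k) := by
  have hset : {x : Fin k → ℝ | (fun i => ⌊x i / s⌋) ∈ G} =
      ⋃ g ∈ G, Set.pi univ fun i => Ico (g i * s) ((g i + 1) * s) := by
    ext x
    simp only [mem_ofPred_eq, mem_iUnion, Set.mem_pi, mem_univ, true_imp_iff, mem_Ico]
    have key : ∀ g : Fin k → ℤ, (∀ i, (g i : ℝ) * s ≤ x i ∧ x i < (g i + 1) * s) ↔
        (fun i => ⌊x i / s⌋) = g := by
      intro g
      rw [funext_iff]
      refine forall_congr' fun i => ?_
      rw [Int.floor_eq_iff, le_div_iff₀ hs, div_lt_iff₀ hs]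
    simp only [key]
    constructor
    · intro h
      exact ⟨_, h, rfl⟩
    · rintro ⟨g, hg, rfl⟩
      exact hg
  rw [hset, MeasureTheory.measure_biUnion_finset]
  · simp only [Real.volume_pi_Ico]
    have : ∀ g : Fin k → ℤ, ∏ i, ENNReal.ofReal (((g i : ℝ) + 1) * s - g i * s) =
        ENNReal.ofReal (s ^ k) := by
      intro g
      have h1 : ∀ i, ((g i : ℝ) + 1) * s - g i * s = s := fun i => by ring
      simp only [h1, Finset.prod_const, Finset.card_univ, Fintype.card_fin]
      rw [ENNReal.ofReal_pow hs.le]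
    simp only [this, Finset.sum_const, nsmul_eq_mul]
    rw [ENNReal.ofReal_mul (by positivity), ENNReal.ofReal_natCast]
  · intro g _ g' _ hne
    rw [Function.onFun, Set.disjoint_left]
    intro x hx hx'
    apply hne
    funext i
    have h1 := hx i (mem_univ i)
    have h2 := hx' i (mem_univ i)
    have e1 : ⌊x i / s⌋ = g i := by
      rw [Int.floor_eq_iff, le_div_iff₀ hs, div_lt_iff₀ hs]; exact h1
    have e2 : ⌊x i / s⌋ = g' i := by
      rw [Int.floor_eq_iff, le_div_iff₀ hs, div_lt_iff₀ hs]; exact h2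
    rw [← e1, e2]
  · intro g _
    exact MeasurableSet.univ_pi fun i => measurableSet_Ico

/-- If `K` is convex and contains the ball of radius `r`, then thickening `t • K` by `ρ` stays
inside `(t + ρ / r) • K`. -/
lemma add_mem_smul_of_convex {E : Type*} [NormedAddCommGroup E] [NormedSpace ℝ E] {K : Set E}
    (hK : Convex ℝ K) {r : ℝ} (hr : 0 < r) (hball : Metric.closedBall 0 r ⊆ K)
    {t ρ : ℝ} (ht : 0 ≤ t) (hρ : 0 < ρ) {x u : E} (hx : x ∈ t • K) (hu : ‖u‖ ≤ ρ) :
    x + u ∈ (t + ρ / r) • K := by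
  have h0 : 0 < ρ / r := by positivity
  rw [hK.add_smul ht h0.le]
  refine Set.add_mem_add hx ?_
  rw [Set.mem_smul_set_iff_inv_smul_mem₀ h0.ne']
  apply hball
  rw [mem_closedBall_zero_iff, norm_smul, norm_inv, Real.norm_of_nonneg h0.le, inv_div,
    div_mul_eq_mul_div, div_le_iff₀ hρ]
  exact mul_le_mul_of_nonneg_left hu hr.le

/-- For a convex body `K` containing the ball of radius `r`, the total volume of the boxes of
side `N` that meet `K` exceeds the number of lattice points in `(1 - 1 / r) • K` at most by a factor that
tends to `1` as `r → ∞`. -/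
lemma card_boxes_le {k : ℕ} {K : Set (Fin k → ℝ)} (hK : Convex ℝ K)
    (hbdd : Bornology.IsBounded K) {r : ℝ} (hr : 2 < r) (hball : Metric.closedBall 0 r ⊆ K)
    {N : ℕ} (hN : 1 ≤ N) (G Ω : Finset (Fin k → ℤ))
    (hG : ∀ g ∈ G, ∃ p ∈ K, ∀ i, ⌊p i / (N : ℝ)⌋ = g i)
    (hΩ : ∀ n : Fin k → ℤ, (fun i => (n i : ℝ)) ∈ (1 - 1 / r) • K → n ∈ Ω) :
    (G.card : ℝ) * N ^ k * (1 - 2 / r) ^ k ≤ (1 + N / r) ^ k * Ω.card := by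
  have hr0 : 0 < r := by linarith
  have hN0 : (0 : ℝ) < N := by exact_mod_cast hN
  have h2r : 0 < 1 - 2 / r := by
    rw [sub_pos, div_lt_one hr0]; exact hr
  set v := MeasureTheory.volume K with hv
  have hvtop : v ≠ ⊤ := hbdd.measure_lt_top.ne
  have hvpos : v ≠ 0 := by
    have h1 : 0 < MeasureTheory.volume (Metric.closedBall (0 : Fin k → ℝ) r) :=
      Metric.measure_closedBall_pos _ _ hr0
    exact (h1.trans_le (MeasureTheory.measure_mono hball)).ne'
  have hvol : ∀ t : ℝ, 0 ≤ t → MeasureTheory.volume (t • K) = ENNReal.ofReal (t ^ k) * v := by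
    intro t ht
    rw [MeasureTheory.Measure.addHaar_smul, Module.finrank_fintype_fun_eq_card, Fintype.card_fin,
      abs_of_nonneg (by positivity)]
  have hup : ENNReal.ofReal (G.card * N ^ k) ≤ ENNReal.ofReal ((1 + N / r) ^ k) * v := by
    rw [← hvol _ (by positivity), ← volume_floor_mem G hN0]
    refine MeasureTheory.measure_mono fun x hx => ?_
    obtain ⟨p, hp, hpg⟩ := hG _ hx
    have hxp : x = p + (x - p) := by abel
    rw [hxp]
    refine add_mem_smul_of_convex hK hr0 hball zero_le_one hN0 (by simpa using hp) ?_
    rw [pi_norm_le_iff_of_nonneg hN0.le]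
    intro i
    have h1 := Int.floor_eq_iff.1 (hpg i)
    have h2 := Int.floor_eq_iff.1 (rfl : ⌊x i / (N : ℝ)⌋ = _)
    rw [le_div_iff₀ hN0, div_lt_iff₀ hN0] at h1 h2
    rw [Real.norm_eq_abs, abs_le, Pi.sub_apply]
    constructor <;> nlinarith [h1.1, h1.2, h2.1, h2.2]
  have hlow : ENNReal.ofReal ((1 - 2 / r) ^ k) * v ≤ ENNReal.ofReal Ω.card := by
    have h1 := volume_floor_mem Ω one_pos
    rw [one_pow, mul_one] at h1
    rw [← hvol _ h2r.le, ← h1]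
    refine MeasureTheory.measure_mono fun x hx => ?_
    refine hΩ _ ?_
    have hxe : (fun i => ((⌊x i / 1⌋ : ℤ) : ℝ)) = x + fun i => ((⌊x i⌋ : ℤ) : ℝ) - x i := by
      funext i
      simp
    rw [hxe, show 1 - 1 / r = (1 - 2 / r) + 1 / r by ring]
    refine add_mem_smul_of_convex hK hr0 hball h2r.le one_pos hx ?_
    rw [pi_norm_le_iff_of_nonneg zero_le_one]
    intro i
    rw [Real.norm_eq_abs, abs_le]
    constructor <;> linarith [Int.floor_le (x i), Int.lt_floor_add_one (x i)]
  -- pass to real numbers and cancel the volume of `K`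
  have hv0 : 0 < v.toReal := ENNReal.toReal_pos hvpos hvtop
  have hup' : (G.card : ℝ) * N ^ k ≤ (1 + N / r) ^ k * v.toReal := by
    have := ENNReal.toReal_mono (ENNReal.mul_ne_top ENNReal.ofReal_ne_top hvtop) hup
    rwa [ENNReal.toReal_mul, ENNReal.toReal_ofReal (by positivity),
      ENNReal.toReal_ofReal (by positivity)] at this
  have hlow' : (1 - 2 / r) ^ k * v.toReal ≤ Ω.card := by
    have := ENNReal.toReal_mono ENNReal.ofReal_ne_top hlow
    rwa [ENNReal.toReal_mul, ENNReal.toReal_ofReal (by positivity),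
      ENNReal.toReal_ofReal (by positivity)] at this
  calc (G.card : ℝ) * N ^ k * (1 - 2 / r) ^ k
      ≤ (1 + N / r) ^ k * v.toReal * (1 - 2 / r) ^ k := by gcongr
    _ = (1 + N / r) ^ k * ((1 - 2 / r) ^ k * v.toReal) := by ring
    _ ≤ (1 + N / r) ^ k * Ω.card := by gcongr

/-- The lattice box `{-M, …, M}^k`. -/
noncomputable def latticeBox (k : ℕ) (M : ℤ) : Finset (Fin k → ℤ) :=
  Finset.Icc (fun _ => -M) (fun _ => M)

lemma mem_latticeBox {k : ℕ} {M : ℤ} {n : Fin k → ℤ} :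
    n ∈ latticeBox k M ↔ ∀ i, -M ≤ n i ∧ n i ≤ M := by
  simp only [latticeBox, Finset.mem_Icc, Pi.le_def]
  exact ⟨fun h i => ⟨h.1 i, h.2 i⟩, fun h => ⟨fun i => (h i).1, fun i => (h i).2⟩⟩

/-- The open Voronoi cell of the origin relative to the points of `A`, cut off at `latticeBox M`:
`2 ⟨n, c⟩ < ⟨c, c⟩` says that `n` is closer to `0` than to `c`. -/
noncomputable def openCell {k : ℕ} (M : ℤ) (A : Finset (Fin k → ℤ)) : Finset (Fin k → ℤ) :=
  (latticeBox k M).filter fun n => ∀ c ∈ A, 2 * dotProduct n c < dotProduct c c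

/-- The closed counterpart of `openCell`. -/
noncomputable def closedCell {k : ℕ} (M : ℤ) (A : Finset (Fin k → ℤ)) : Finset (Fin k → ℤ) :=
  (latticeBox k M).filter fun n => ∀ c ∈ A, 2 * dotProduct n c ≤ dotProduct c c

lemma openCell_subset_closedCell {k : ℕ} (M : ℤ) (A : Finset (Fin k → ℤ)) :
    openCell M A ⊆ closedCell M A := by
  intro n hn
  simp only [openCell, closedCell, Finset.mem_filter] at hn ⊢
  exact ⟨hn.1, fun c hc => (hn.2 c hc).le⟩

/-- Indices of the boxes `N g + {0, …, N-1}^k` that meet the closed cell. -/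
noncomputable def cellBoxes {k : ℕ} (M : ℤ) (N : ℕ) (A : Finset (Fin k → ℤ)) : Finset (Fin k → ℤ) :=
  (closedCell M A).image fun n i => n i / (N : ℤ)

lemma card_cellBoxes_le {k : ℕ} (hk : 1 ≤ k) {ρ : ℕ} (hρ : 2 < ρ) {N : ℕ} (hN : 1 ≤ N)
    {M : ℤ} (hM : (ρ : ℤ) ≤ M) (A : Finset (Fin k → ℤ))
    (hA : ∀ c ∈ A, ∃ j, (2 * k * ρ : ℤ) ≤ |c j|) :
    ((cellBoxes M N A).card : ℝ) * N ^ k * (1 - 2 / ρ) ^ k ≤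
      (1 + N / ρ) ^ k * (openCell M A).card := by
  let K : Set (Fin k → ℝ) := {x | (∀ i, x i ∈ Icc (-(M : ℝ)) M) ∧
    ∀ c ∈ A, 2 * dotProduct x (fun i => (c i : ℝ)) ≤ (dotProduct c c : ℤ)}
  have hρ0 : (2 : ℝ) < ρ := by exact_mod_cast hρ
  have hM' : (ρ : ℝ) ≤ M := by exact_mod_cast hM
  have hconv : Convex ℝ K := by
    intro x hx y hy a b ha hb hab
    refine ⟨fun i => convex_Icc (-(M : ℝ)) M (hx.1 i) (hy.1 i) ha hb hab, fun c hc => ?_⟩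
    have h1 := hx.2 c hc
    have h2 := hy.2 c hc
    rw [add_dotProduct, smul_dotProduct, smul_dotProduct, smul_eq_mul, smul_eq_mul]
    have h3 : ((dotProduct c c : ℤ) : ℝ) = a * (dotProduct c c : ℤ) + b * (dotProduct c c : ℤ) := by
      rw [← add_mul, hab, one_mul]
    rw [h3]
    nlinarith
  have hbdd : Bornology.IsBounded K := by
    refine (Metric.isBounded_closedBall (x := (0 : Fin k → ℝ)) (r := M)).subset fun x hx => ?_
    rw [mem_closedBall_zero_iff, pi_norm_le_iff_of_nonneg (by linarith)]
    intro i
    rw [Real.norm_eq_abs, abs_le]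
    exact hx.1 i
  have hball : Metric.closedBall 0 (ρ : ℝ) ⊆ K := by
    intro x hx
    rw [mem_closedBall_zero_iff, pi_norm_le_iff_of_nonneg (by linarith)] at hx
    refine ⟨fun i => ?_, fun c hc => ?_⟩
    · have := abs_le.1 (hx i)
      constructor <;> linarith [this.1, this.2]
    · have hne : Nonempty (Fin k) := ⟨⟨0, hk⟩⟩
      -- `j` is the largest coordinate of `c`: `2 ⟨x, c⟩ ≤ 2 k ρ |c j| ≤ |c j| ^ 2 ≤ ⟨c, c⟩`
      obtain ⟨j, hj⟩ := Finite.exists_max fun i => |c i|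
      obtain ⟨j', hj'⟩ := hA c hc
      have hcj : (2 * k * ρ : ℝ) ≤ |(c j : ℝ)| := by exact_mod_cast hj'.trans (hj j')
      have h1 : dotProduct x (fun i => (c i : ℝ)) ≤ k * (ρ * |(c j : ℝ)|) := by
        calc dotProduct x (fun i => (c i : ℝ)) ≤ ∑ _i : Fin k, ρ * |(c j : ℝ)| := by
              refine Finset.sum_le_sum fun i _ => ?_
              refine (le_abs_self _).trans ?_
              rw [abs_mul]
              refine mul_le_mul (hx i) ?_ (abs_nonneg _) (by linarith)
              change |(c i : ℝ)| ≤ |(c j : ℝ)|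
              exact_mod_cast hj i
          _ = k * (ρ * |(c j : ℝ)|) := by simp
      have h2 : |(c j : ℝ)| * |(c j : ℝ)| ≤ (dotProduct c c : ℤ) := by
        have : c j * c j ≤ dotProduct c c :=
          Finset.single_le_sum (f := fun i => c i * c i) (fun i _ => mul_self_nonneg _)
            (Finset.mem_univ j)
        rw [abs_mul_abs_self]
        exact_mod_cast this
      nlinarith [abs_nonneg (c j : ℝ)]
  have hN0 : (0 : ℝ) < N := by exact_mod_cast hN
  refine card_boxes_le hconv hbdd hρ0 hball hN _ _ ?_ ?_
  · intro g hg
    obtain ⟨n, hn, rfl⟩ := Finset.mem_image.1 hg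
    obtain ⟨hn1, hn2⟩ := Finset.mem_filter.1 hn
    refine ⟨fun i => (n i : ℝ), ⟨fun i => ?_, fun c hc => ?_⟩, fun i => ?_⟩
    · have := mem_latticeBox.1 hn1 i
      change (n i : ℝ) ∈ Icc (-(M : ℝ)) M
      exact ⟨by exact_mod_cast this.1, by exact_mod_cast this.2⟩
    · have := hn2 c hc
      have h3 : dotProduct (fun i => (n i : ℝ)) (fun i => (c i : ℝ)) = (dotProduct n c : ℤ) := by
        simp [dotProduct]
      rw [h3]
      exact_mod_cast this
    · have h4 := Rat.floor_intCast_div_natCast (n i) N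
      change ⌊(n i : ℝ) / N⌋ = n i / (N : ℤ)
      rw [← h4, ← Rat.floor_cast (α := ℝ) ((n i : ℚ) / N)]
      push_cast
      rfl
  · intro n hn
    obtain ⟨x, hx, hxn⟩ := hn
    have hs0 : 0 < 1 - 1 / (ρ : ℝ) := by
      rw [sub_pos, div_lt_one (by linarith)]; linarith
    have hs1 : 1 - 1 / (ρ : ℝ) < 1 := by
      have : 0 < 1 / (ρ : ℝ) := by positivity
      linarith
    have hxn' : ∀ i, (n i : ℝ) = (1 - 1 / (ρ : ℝ)) * x i := fun i => (congrFun hxn i).symm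
    refine Finset.mem_filter.2 ⟨mem_latticeBox.2 fun i => ?_, fun c hc => ?_⟩
    · have h1 := hx.1 i
      have h2 := hxn' i
      have : -(M : ℝ) ≤ n i ∧ (n i : ℝ) ≤ M := by
        rw [h2]
        constructor <;> nlinarith [h1.1, h1.2]
      exact ⟨by exact_mod_cast this.1, by exact_mod_cast this.2⟩
    · have h1 := hx.2 c hc
      have hpos : (0 : ℝ) < (dotProduct c c : ℤ) := by
        obtain ⟨j, hj⟩ := hA c hc
        have hcj : c j ≠ 0 := by
          rintro h0
          rw [h0, abs_zero] at hj
          have : (0 : ℤ) < 2 * k * ρ := by positivity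
          omega
        have h5 : c j * c j ≤ dotProduct c c :=
          Finset.single_le_sum (f := fun i => c i * c i) (fun i _ => mul_self_nonneg _)
            (Finset.mem_univ j)
        have h6 : 0 < c j * c j := mul_self_pos.2 hcj
        exact_mod_cast h6.trans_le h5
      have h3 : ((dotProduct n c : ℤ) : ℝ) =
          (1 - 1 / (ρ : ℝ)) * dotProduct x (fun i => (c i : ℝ)) := by
        rw [← smul_eq_mul, ← smul_dotProduct]
        simp only [dotProduct, Int.cast_sum, Int.cast_mul]
        exact Finset.sum_congr rfl fun i _ => by rw [hxn' i]; rfl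
      have : (2 : ℝ) * (dotProduct n c : ℤ) < (dotProduct c c : ℤ) := by
        rw [h3]
        nlinarith
      exact_mod_cast this

/-- If the markers are sparse enough, the open cells have enough room for the boxes needed to
cover the closed cells, with `n < D N^k / 2` dimensions for each box. -/
lemma exists_radius {k D N n : ℕ} (hk : 1 ≤ k) (hN : 1 ≤ N) (hn : 2 * n < D * N ^ k) :
    ∃ ρ : ℕ, 2 < ρ ∧ ∀ (M : ℤ), (ρ : ℤ) ≤ M → ∀ A : Finset (Fin k → ℤ),
      (∀ c ∈ A, ∃ j, (2 * k * ρ : ℤ) ≤ |c j|) →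
      2 * ((cellBoxes M N A).card * n) < (openCell M A).card * D := by
  have hinv : Tendsto (fun ρ : ℕ => ((ρ : ℝ))⁻¹) atTop (𝓝 0) :=
    tendsto_inv_atTop_nhds_zero_nat
  have hl : Tendsto (fun ρ : ℕ => (2 * n : ℝ) * (1 + N / (ρ : ℝ)) ^ k) atTop (𝓝 (2 * n)) := by
    have : Tendsto (fun ρ : ℕ => (2 * n : ℝ) * (1 + N * ((ρ : ℝ))⁻¹) ^ k) atTop
        (𝓝 (2 * n * (1 + N * 0) ^ k)) :=
      ((((hinv.const_mul _).const_add 1).pow k).const_mul _)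
    simpa [div_eq_mul_inv] using this
  have hr : Tendsto (fun ρ : ℕ => (D * N ^ k : ℝ) * (1 - 2 / (ρ : ℝ)) ^ k) atTop
      (𝓝 (D * N ^ k)) := by
    have : Tendsto (fun ρ : ℕ => (D * N ^ k : ℝ) * (1 - 2 * ((ρ : ℝ))⁻¹) ^ k) atTop
        (𝓝 (D * N ^ k * (1 - 2 * 0) ^ k)) :=
      ((((hinv.const_mul _).const_sub 1).pow k).const_mul _)
    simpa [div_eq_mul_inv] using this
  have hlt : (2 * n : ℝ) < D * N ^ k := by exact_mod_cast hn
  obtain ⟨ρ, hρlt, hρ2⟩ := ((hl.eventually_lt hr hlt).and (eventually_gt_atTop 2)).exists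
  refine ⟨ρ, hρ2, fun M hM A hA => ?_⟩
  have hcard := card_cellBoxes_le hk hρ2 hN hM A hA
  have hρ0 : (2 : ℝ) < ρ := by exact_mod_cast hρ2
  have hs : 0 < 1 - 2 / (ρ : ℝ) := by
    rw [sub_pos, div_lt_one (by linarith)]; exact hρ0
  have hN0 : (0 : ℝ) < N := by exact_mod_cast hN
  have hΩ : (0 : ℝ) < (openCell M A).card := by
    have : (0 : Fin k → ℤ) ∈ openCell M A := by
      refine Finset.mem_filter.2 ⟨mem_latticeBox.2 fun i => ?_, fun c hc => ?_⟩
      · simp only [Pi.zero_apply]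
        omega
      · obtain ⟨j, hj⟩ := hA c hc
        have hcj : c j ≠ 0 := by
          rintro h0
          rw [h0, abs_zero] at hj
          have : (0 : ℤ) < 2 * k * ρ := by positivity
          omega
        have h5 : c j * c j ≤ dotProduct c c :=
          Finset.single_le_sum (f := fun i => c i * c i) (fun i _ => mul_self_nonneg _)
            (Finset.mem_univ j)
        have h6 : 0 < c j * c j := mul_self_pos.2 hcj
        rw [zero_dotProduct]
        linarith
    exact_mod_cast Finset.card_pos.2 ⟨_, this⟩
  set c : ℝ := N ^ k * (1 - 2 / (ρ : ℝ)) ^ k with hc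
  have hc0 : 0 < c := by positivity
  have hfin : (2 * ((cellBoxes M N A).card * n) : ℝ) * c < (openCell M A).card * D * c := by
    calc (2 * ((cellBoxes M N A).card * n) : ℝ) * c
        = 2 * n * ((cellBoxes M N A).card * N ^ k * (1 - 2 / (ρ : ℝ)) ^ k) := by rw [hc]; ring
      _ ≤ 2 * n * ((1 + N / (ρ : ℝ)) ^ k * (openCell M A).card) := by gcongr
      _ = (2 * n * (1 + N / (ρ : ℝ)) ^ k) * (openCell M A).card := by ring
      _ < (D * N ^ k * (1 - 2 / (ρ : ℝ)) ^ k) * (openCell M A).card := by gcongr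
      _ = (openCell M A).card * D * c := by rw [hc]; ring
  have := lt_of_mul_lt_mul_right hfin hc0.le
  exact_mod_cast this

/-! ### Markers in zero-dimensional systems -/

/-- A free zero-dimensional system has clopen marker sets: the visits of an orbit to `C` are
`Fs`-separated and `Fs`-dense. -/
lemma exists_marker {k : ℕ} {Z : Type*} [MetricSpace Z] [CompactSpace Z]
    {S : (Fin k → ℤ) → Z → Z} (hS : IsZkAction S)
    (hzerodim : ∀ (z : Z) (U : Set Z), IsOpen U → z ∈ U →
      ∃ W : Set Z, IsClopen W ∧ z ∈ W ∧ W ⊆ U)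
    (hfree : ∀ (z : Z) (g : Fin k → ℤ), g ≠ 0 → S g z ≠ z)
    (Fs : Finset (Fin k → ℤ)) (h0 : 0 ∈ Fs) (hneg : ∀ n ∈ Fs, -n ∈ Fs) :
    ∃ C : Set Z, IsClopen C ∧ (∀ z ∈ C, ∀ n ∈ Fs, n ≠ 0 → S n z ∉ C) ∧
      ∀ z, ∃ n ∈ Fs, S n z ∈ C := by
  have hloc : ∀ z, ∃ U : Set Z, IsClopen U ∧ z ∈ U ∧
      ∀ w ∈ U, ∀ n ∈ Fs, n ≠ 0 → S n w ∉ U := by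
    intro z
    have hV : ∀ n : Fin k → ℤ, ∃ V : Set Z, n ≠ 0 →
        IsOpen V ∧ z ∈ V ∧ ∀ w ∈ V, S n w ∉ V := by
      intro n
      by_cases hn : n = 0
      · exact ⟨univ, fun h => absurd hn h⟩
      obtain ⟨V1, V2, h1, h2, hz1, hz2, hd⟩ := t2_separation (hfree z n hn)
      exact ⟨V2 ∩ S n ⁻¹' V1, fun _ => ⟨h2.inter (h1.preimage (hS.cont n)), ⟨hz2, hz1⟩,
        fun w hw hw' => Set.disjoint_left.1 hd hw.2 hw'.1⟩⟩
    choose V hV using hV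
    obtain ⟨W, hW, hzW, hWs⟩ := hzerodim z (⋂ n ∈ Fs.erase 0, V n)
      (isOpen_biInter_finset fun n hn => (hV n (Finset.ne_of_mem_erase hn)).1)
      (Set.mem_iInter₂.2 fun n hn => (hV n (Finset.ne_of_mem_erase hn)).2.1)
    refine ⟨W, hW, hzW, fun w hw n hn hn0 hw' => ?_⟩
    have h1 := Set.mem_iInter₂.1 (hWs hw) n (Finset.mem_erase.2 ⟨hn0, hn⟩)
    have h2 := Set.mem_iInter₂.1 (hWs hw') n (Finset.mem_erase.2 ⟨hn0, hn⟩)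
    exact (hV n hn0).2.2 w h1 h2
  choose U hUc hzU hUs using hloc
  obtain ⟨t, ht⟩ := isCompact_univ.elim_finite_subcover U (fun z => (hUc z).isOpen)
    (fun z _ => Set.mem_iUnion.2 ⟨z, hzU z⟩)
  -- the marker set is built greedily along the cover
  have hind : ∀ t : Finset Z, ∃ C : Set Z, IsClopen C ∧
      (∀ z ∈ C, ∀ n ∈ Fs, n ≠ 0 → S n z ∉ C) ∧
      ∀ y ∈ t, ∀ z ∈ U y, ∃ n ∈ Fs, S n z ∈ C := by
    classical
    intro t
    induction t using Finset.induction_on with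
    | empty => exact ⟨∅, isClopen_empty, by simp, by simp⟩
    | insert y t _ ih =>
      obtain ⟨C, hC, hCs, hCt⟩ := ih
      have hpre : IsClopen (⋃ n ∈ Fs, S n ⁻¹' C) :=
        isClopen_biUnion_finset fun n _ => hC.preimage (hS.cont n)
      refine ⟨C ∪ (U y \ ⋃ n ∈ Fs, S n ⁻¹' C), hC.union ((hUc y).diff hpre), ?_, ?_⟩
      · rintro z (hz | ⟨hz, hz'⟩) n hn hn0 (hw | ⟨hw, hw'⟩)
        · exact hCs z hz n hn hn0 hw
        · apply hw'
          refine Set.mem_iUnion₂.2 ⟨-n, hneg n hn, ?_⟩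
          rw [Set.mem_preimage, ← hS.map_add, neg_add_cancel, hS.map_zero]
          exact hz
        · exact hz' (Set.mem_iUnion₂.2 ⟨n, hn, hw⟩)
        · exact hUs y z hz n hn hn0 hw
      · intro y' hy' z hz
        rcases Finset.mem_insert.1 hy' with rfl | hy'
        · by_cases h : z ∈ ⋃ n ∈ Fs, S n ⁻¹' C
          · obtain ⟨n, hn, hz'⟩ := Set.mem_iUnion₂.1 h
            exact ⟨n, hn, Or.inl hz'⟩
          · refine ⟨0, h0, Or.inr ?_⟩
            rw [hS.map_zero]
            exact ⟨hz, h⟩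
        · obtain ⟨n, hn, hz'⟩ := hCt y' hy' z hz
          exact ⟨n, hn, Or.inl hz'⟩
  obtain ⟨C, hC, hCs, hCt⟩ := hind t
  refine ⟨C, hC, hCs, fun z => ?_⟩
  obtain ⟨y, hy, hz⟩ := Set.mem_iUnion₂.1 (ht (mem_univ z))
  exact hCt y hy z hz

/-! ### Generic maps on a single tile -/

/-- On a tile `Ω` covered by the boxes indexed by `G`, the orbit segments of `f` can be perturbed
so that they determine the point up to `ε` at all times in these boxes, provided
`2 |G| n < |Ω| D`. -/
lemma exists_tile_map {k D : ℕ} {X : Type*} [MetricSpace X] [CompactSpace X]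
    {T : (Fin k → ℤ) → X → X} (hT : IsZkAction T) {N n m : ℕ} {σ : Type} [Finite σ]
    (φ : σ → (Fin n → ℝ) →ᵃ[ℝ] (Fin m → ℝ)) (F : X → Fin m → ℝ) (hF : Continuous F)
    (hFφ : ∀ x, F x ∈ ⋃ s, range (φ s)) {ε : ℝ}
    (hFε : ∀ x y, F x = F y → ∀ a : Fin k → Fin N,
      dist (T (fun i => (a i : ℤ)) x) (T (fun i => (a i : ℤ)) y) < ε)
    (G Ω : Finset (Fin k → ℤ)) (hcard : 2 * (G.card * n) < Ω.card * D)
    (hΩ : ∀ a ∈ Ω, ∃ g ∈ G, ∃ b : Fin k → Fin N,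
      a = (fun i => (b i : ℤ)) + fun i => (N : ℤ) * g i)
    (f : C(X, Fin D → Icc (0 : ℝ) 1)) {δ : ℝ} (hδ : 0 < δ) (hδ1 : δ ≤ 1)
    (hfδ : ∀ x y, dist x y < ε → ∀ d, |(f x d : ℝ) - f y d| < δ) :
    ∃ h : (Fin k → ℤ) → X → Fin D → Icc (0 : ℝ) 1, (∀ a, Continuous (h a)) ∧
      (∀ a x d, |(h a x d : ℝ) - f (T a x) d| < 2 * δ) ∧
      ∀ x y, (∀ a ∈ Ω, h a x = h a y) → ∀ g ∈ G, ∀ b : Fin k → Fin N,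
        dist (T ((fun i => (b i : ℤ)) + fun i => (N : ℤ) * g i) x)
          (T ((fun i => (b i : ℤ)) + fun i => (N : ℤ) * g i) y) < ε := by
  classical
  let φ' : (G → σ) → (G × Fin n → ℝ) →ᵃ[ℝ] (G × Fin m → ℝ) := fun s =>
    AffineMap.pi fun q => (LinearMap.proj q.2 : (Fin m → ℝ) →ₗ[ℝ] ℝ).toAffineMap.comp
      ((φ (s q.1)).comp (LinearMap.funLeft ℝ ℝ (fun l : Fin n => (q.1, l))).toAffineMap)
  have hφ' : ∀ s v q, φ' s v q = φ (s q.1) (fun l => v (q.1, l)) q.2 := fun s v q => rfl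
  let F' : X → G × Fin m → ℝ := fun x q => F (T (fun i => (N : ℤ) * q.1.1 i) x) q.2
  have hF' : Continuous F' := continuous_pi fun q =>
    (continuous_apply q.2).comp (hF.comp (hT.cont _))
  have hF'φ : ∀ x, F' x ∈ ⋃ s, range (φ' s) := by
    intro x
    have : ∀ g : G, ∃ s v, φ s v = F (T (fun i => (N : ℤ) * g.1 i) x) := fun g => by
      obtain ⟨s, v, hv⟩ := Set.mem_iUnion.1 (hFφ (T (fun i => (N : ℤ) * g.1 i) x))
      exact ⟨s, v, hv⟩
    choose s v hsv using this
    refine Set.mem_iUnion.2 ⟨s, fun q => v q.1 q.2, ?_⟩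
    funext q
    rw [hφ']
    exact congrFun (hsv q.1) q.2
  have hbox : ∀ x y, F' x = F' y → ∀ g ∈ G, ∀ b : Fin k → Fin N,
        dist (T ((fun i => (b i : ℤ)) + fun i => (N : ℤ) * g i) x)
          (T ((fun i => (b i : ℤ)) + fun i => (N : ℤ) * g i) y) < ε := by
    intro x y hxy g hg b
    rw [hT.map_add, hT.map_add]
    refine hFε _ _ ?_ b
    funext l
    exact congrFun hxy (⟨g, hg⟩, l)
  obtain ⟨u, hu, hu01, huh, huF⟩ := exists_generic_approx (ι := Ω × Fin D) φ'
    (by simpa using hcard) F' hF' hF'φ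
    (fun x q => (f (T q.1.1 x) q.2 : ℝ))
    (continuous_pi fun q => continuous_subtype_val.comp ((continuous_apply q.2).comp
      (f.continuous.comp (hT.cont _))))
    (fun x q => (f (T q.1.1 x) q.2).2) δ hδ hδ1
    (fun x y hxy q => by
      obtain ⟨g, hg, b, hb⟩ := hΩ q.1.1 q.1.2
      refine hfδ _ _ ?_ q.2
      rw [hb]
      exact hbox x y hxy g hg b)
  refine ⟨fun a x d => if ha : a ∈ Ω then ⟨u x (⟨a, ha⟩, d), hu01 _ _⟩ else f (T a x) d,
    fun a => ?_, fun a x d => ?_, fun x y hxy => ?_⟩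
  · by_cases ha : a ∈ Ω
    · simp only [ha, dite_true]
      exact continuous_pi fun d => ((continuous_apply _).comp hu).subtype_mk _
    · simp only [ha, dite_false]
      exact f.continuous.comp (hT.cont a)
  · by_cases ha : a ∈ Ω
    · simp only [ha, dite_true]
      exact huh x (⟨a, ha⟩, d)
    · simp only [ha, dite_false, sub_self, abs_zero]
      linarith
  · refine hbox x y (huF x y ?_)
    funext q
    have := congrArg Subtype.val (congrFun (hxy q.1.1 q.1.2) q.2)
    simpa [q.1.2] using this

/-! ### Gluing along the Voronoi tiling -/

open Classical in
/-- Displacements in `latticeBox (2 M)` from `z` to the other visits of its orbit to `C`. -/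
noncomputable def markerSet {k : ℕ} {Z : Type*} (S : (Fin k → ℤ) → Z → Z) (C : Set Z) (M : ℤ)
    (z : Z) : Finset (Fin k → ℤ) :=
  (latticeBox k (2 * M)).filter fun c => c ≠ 0 ∧ S c z ∈ C

lemma mem_markerSet {k : ℕ} {Z : Type*} {S : (Fin k → ℤ) → Z → Z} {C : Set Z} {M : ℤ}
    {z : Z} {c : Fin k → ℤ} :
    c ∈ markerSet S C M z ↔ c ∈ latticeBox k (2 * M) ∧ c ≠ 0 ∧ S c z ∈ C := by
  simp [markerSet]

/-- `z` lies at position `a` inside the open Voronoi cell of the marker `S (-a) z`. -/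
def CellPos {k : ℕ} {Z : Type*} (S : (Fin k → ℤ) → Z → Z) (C : Set Z) (M : ℤ)
    (z : Z) (a : Fin k → ℤ) : Prop :=
  S (-a) z ∈ C ∧ a ∈ openCell M (markerSet S C M (S (-a) z))

/-- Distinct open Voronoi cells are disjoint. -/
lemma CellPos.unique {k : ℕ} {Z : Type*} [TopologicalSpace Z] {S : (Fin k → ℤ) → Z → Z}
    (hS : IsZkAction S) {C : Set Z} {M : ℤ} {z : Z} {a a' : Fin k → ℤ}
    (h : CellPos S C M z a) (h' : CellPos S C M z a') : a = a' := by
  by_contra hne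
  have key : ∀ {a a' : Fin k → ℤ}, a ≠ a' → CellPos S C M z a → CellPos S C M z a' →
      2 * dotProduct a (a - a') < dotProduct (a - a') (a - a') := by
    intro a a' hne h h'
    obtain ⟨h1, h2⟩ := Finset.mem_filter.1 h.2
    obtain ⟨h1', -⟩ := Finset.mem_filter.1 h'.2
    refine h2 _ (mem_markerSet.2 ⟨mem_latticeBox.2 fun i => ?_, sub_ne_zero.2 hne, ?_⟩)
    · have := mem_latticeBox.1 h1 i
      have := mem_latticeBox.1 h1' i
      rw [Pi.sub_apply]
      constructor <;> linarith
    · rw [← hS.map_add, show a - a' + -a = -a' by abel]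
      exact h'.1
  have h1 := key hne h h'
  have h2 := key (Ne.symm hne) h' h
  simp only [dotProduct_sub, sub_dotProduct] at h1 h2
  rw [dotProduct_comm a' a] at *
  linarith

/-- The cell position of nearby points is the same, and so is the shape of their cell. -/
lemma eventually_markers_eq {k : ℕ} {Z : Type*} [TopologicalSpace Z] {S : (Fin k → ℤ) → Z → Z}
    (hS : IsZkAction S) {C : Set Z} (hC : IsClopen C) (M : ℤ) (z : Z) :
    ∀ᶠ w in 𝓝 z, ∀ a, (CellPos S C M w a ↔ CellPos S C M z a) ∧
      (a ∈ latticeBox k M → markerSet S C M (S (-a) w) = markerSet S C M (S (-a) z)) := by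
  have h1 : ∀ᶠ w in 𝓝 z, ∀ c ∈ latticeBox k (3 * M), (S c w ∈ C ↔ S c z ∈ C) := by
    rw [Finset.eventually_all]
    intro c _
    by_cases hc : S c z ∈ C
    · filter_upwards [(hC.preimage (hS.cont c)).isOpen.mem_nhds hc] with w hw
      exact ⟨fun _ => hc, fun _ => hw⟩
    · filter_upwards [(hC.preimage (hS.cont c)).compl.isOpen.mem_nhds hc] with w hw
      exact ⟨fun h => absurd h hw, fun h => absurd h hc⟩
  filter_upwards [h1] with w hw a
  have h2 : a ∈ latticeBox k M →
      markerSet S C M (S (-a) w) = markerSet S C M (S (-a) z) := by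
    intro ha
    ext c
    rw [mem_markerSet, mem_markerSet]
    refine and_congr_right fun hc => and_congr_right fun _ => ?_
    rw [← hS.map_add, ← hS.map_add]
    refine hw _ (mem_latticeBox.2 fun i => ?_)
    have := mem_latticeBox.1 ha i
    have := mem_latticeBox.1 hc i
    rw [Pi.add_apply, Pi.neg_apply]
    constructor <;> linarith
  refine ⟨?_, h2⟩
  by_cases ha : a ∈ latticeBox k M
  · have h3 : S (-a) w ∈ C ↔ S (-a) z ∈ C := by
      refine hw _ (mem_latticeBox.2 fun i => ?_)
      have := mem_latticeBox.1 ha i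
      rw [Pi.neg_apply]
      constructor <;> linarith
    rw [CellPos, CellPos, h3, h2 ha]
  · exact ⟨fun h => absurd (Finset.mem_filter.1 h.2).1 ha,
      fun h => absurd (Finset.mem_filter.1 h.2).1 ha⟩

/-- Every point lies in the closed Voronoi cell of a nearest marker. -/
lemma exists_closedCell {k : ℕ} (hk : 1 ≤ k) {Z : Type*} [TopologicalSpace Z]
    {S : (Fin k → ℤ) → Z → Z} (hS : IsZkAction S) {C : Set Z} {R : ℤ} (hR : 0 ≤ R)
    (hcov : ∀ z, ∃ n ∈ latticeBox k R, S n z ∈ C) (z : Z) :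
    ∃ p, S p z ∈ C ∧ -p ∈ closedCell (k * R) (markerSet S C (k * R) (S p z)) := by
  classical
  have hk' : (1 : ℤ) ≤ k := by exact_mod_cast hk
  have hRM : R ≤ k * R := by nlinarith
  obtain ⟨p₀, hp₀, hp₀C⟩ := hcov z
  have hp₀' : p₀ ∈ (latticeBox k (k * R)).filter fun p => S p z ∈ C := by
    refine Finset.mem_filter.2 ⟨mem_latticeBox.2 fun i => ?_, hp₀C⟩
    have := mem_latticeBox.1 hp₀ i
    constructor <;> linarith
  obtain ⟨p, hp, hmin⟩ := Finset.exists_min_image _ (fun p : Fin k → ℤ => dotProduct p p)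
    ⟨p₀, hp₀'⟩
  obtain ⟨hpB, hpC⟩ := Finset.mem_filter.1 hp
  refine ⟨p, hpC, Finset.mem_filter.2 ⟨mem_latticeBox.2 fun i => ?_, fun c hc => ?_⟩⟩
  · have := mem_latticeBox.1 hpB i
    rw [Pi.neg_apply]
    constructor <;> linarith
  · obtain ⟨-, -, hcC⟩ := mem_markerSet.1 hc
    rw [← hS.map_add] at hcC
    have hle : dotProduct p p ≤ dotProduct (c + p) (c + p) := by
      by_cases hB : c + p ∈ latticeBox k (k * R)
      · exact hmin _ (Finset.mem_filter.2 ⟨hB, hcC⟩)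
      · -- outside the box, `|c + p| ≥ k R`, while the nearest marker is within `√k R`
        have h1 : dotProduct p p ≤ k * (R * R) := by
          refine (hmin _ hp₀').trans ?_
          calc dotProduct p₀ p₀ ≤ ∑ _i : Fin k, R * R := by
                refine Finset.sum_le_sum fun i _ => ?_
                have := mem_latticeBox.1 hp₀ i
                nlinarith
            _ = k * (R * R) := by simp
        rw [mem_latticeBox] at hB
        push Not at hB
        obtain ⟨i, hi⟩ := hB
        have h2 : (k * R) * (k * R) ≤ (c + p) i * (c + p) i := by
          rcases le_or_gt (-(k * R)) ((c + p) i) with h | h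
          · have := hi h
            nlinarith
          · nlinarith
        have h3 : (c + p) i * (c + p) i ≤ dotProduct (c + p) (c + p) :=
          Finset.single_le_sum (f := fun i => (c + p) i * (c + p) i)
            (fun i _ => mul_self_nonneg _) (Finset.mem_univ i)
        have h4 : k * (R * R) ≤ (k * R) * (k * R) := by
          nlinarith [mul_nonneg hR hR]
        linarith
    rw [add_dotProduct, dotProduct_add, dotProduct_add, dotProduct_comm p c] at hle
    rw [neg_dotProduct, dotProduct_comm p c]
    linarith

/-- Maps chosen for each shape of a cell glue to a continuous map on `X`, because the Voronoi
tiling depends on `π x` in a locally constant way. -/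
lemma exists_glued_map {k D : ℕ} (hk : 1 ≤ k) {X : Type*} [MetricSpace X]
    {T : (Fin k → ℤ) → X → X} (hT : IsZkAction T)
    {Z : Type*} [TopologicalSpace Z] {S : (Fin k → ℤ) → Z → Z} (hS : IsZkAction S)
    {π : X → Z} (hπcont : Continuous π) (hπequiv : ∀ g x, π (T g x) = S g (π x))
    {C : Set Z} (hC : IsClopen C) {R : ℤ} (hR : 0 ≤ R)
    (hsep : ∀ z ∈ C, ∀ n ∈ latticeBox k R, n ≠ 0 → S n z ∉ C)
    (hcov : ∀ z, ∃ n ∈ latticeBox k R, S n z ∈ C)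
    (f : C(X, Fin D → Icc (0 : ℝ) 1)) {δ ε : ℝ} (hδ : 0 < δ)
    (h : Finset (Fin k → ℤ) → (Fin k → ℤ) → X → Fin D → Icc (0 : ℝ) 1)
    (hcont : ∀ A a, Continuous (h A a))
    (hclose : ∀ A a x d, |(h A a x d : ℝ) - f (T a x) d| < 2 * δ)
    (hinj : ∀ A, (∀ c ∈ A, ∃ j, R ≤ |c j|) → ∀ x y,
      (∀ a ∈ openCell (k * R) A, h A a x = h A a y) →
      ∀ a ∈ closedCell (k * R) A, dist (T a x) (T a y) < ε) :
    ∃ g : C(X, Fin D → Icc (0 : ℝ) 1), (∀ x d, |(g x d : ℝ) - f x d| < 2 * δ) ∧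
      ∀ x y, (∀ n, g (T n x) = g (T n y)) → π x = π y → dist x y < ε := by
  classical
  set M : ℤ := k * R with hM
  let g : X → Fin D → Icc (0 : ℝ) 1 := fun x =>
    if hx : ∃ a, CellPos S C M (π x) a then
      h (markerSet S C M (S (-hx.choose) (π x))) hx.choose (T (-hx.choose) x) else f x
  have hg : ∀ x a, CellPos S C M (π x) a →
      g x = h (markerSet S C M (S (-a) (π x))) a (T (-a) x) := by
    intro x a ha
    have hx : ∃ a, CellPos S C M (π x) a := ⟨a, ha⟩
    have e : hx.choose = a := hx.choose_spec.unique hS ha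
    simp only [g, dif_pos hx, e]
  have hg' : ∀ x, (¬ ∃ a, CellPos S C M (π x) a) → g x = f x := fun x hx => by
    simp only [g, dif_neg hx]
  have hgc : Continuous g := by
    rw [continuous_iff_continuousAt]
    intro x
    have hev := (hπcont.tendsto x).eventually (eventually_markers_eq hS hC M (π x))
    by_cases hx : ∃ a, CellPos S C M (π x) a
    · obtain ⟨a, ha⟩ := hx
      refine ContinuousAt.congr (f := fun y => h (markerSet S C M (S (-a) (π x))) a (T (-a) y))
        ((hcont _ _).comp (hT.cont _)).continuousAt ?_
      filter_upwards [hev] with y hy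
      rw [hg y a ((hy a).1.2 ha), (hy a).2 (Finset.mem_filter.1 ha.2).1]
    · refine ContinuousAt.congr f.continuous.continuousAt ?_
      filter_upwards [hev] with y hy
      refine (hg' y fun ⟨a, ha⟩ => hx ⟨a, (hy a).1.1 ha⟩).symm
  refine ⟨⟨g, hgc⟩, fun x d => ?_, fun x y hxy hπ => ?_⟩
  · change |(g x d : ℝ) - f x d| < 2 * δ
    by_cases hx : ∃ a, CellPos S C M (π x) a
    · obtain ⟨a, ha⟩ := hx
      rw [hg x a ha]
      have := hclose (markerSet S C M (S (-a) (π x))) a (T (-a) x) d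
      rwa [← hT.map_add, add_neg_cancel, hT.map_zero] at this
    · rw [hg' x hx, sub_self, abs_zero]
      linarith
  · obtain ⟨p, hpC, hp⟩ := exists_closedCell hk hS hR hcov (π x)
    rw [← hM] at hp
    have hval : ∀ w, π w = π x → ∀ a ∈ openCell M (markerSet S C M (S p (π x))),
        g (T (a + p) w) = h (markerSet S C M (S p (π x))) a (T p w) := by
      intro w hw a ha
      have e : S (-a) (π (T (a + p) w)) = S p (π x) := by
        rw [hπequiv, ← hS.map_add, neg_add_cancel_left, hw]
      rw [hg (T (a + p) w) a ⟨by rw [e]; exact hpC, by rw [e]; exact ha⟩, e, ← hT.map_add,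
        neg_add_cancel_left]
    have hd := hinj (markerSet S C M (S p (π x))) (fun c hc => ?_) (T p x) (T p y)
      (fun a ha => by
        rw [← hval x rfl a ha, ← hval y hπ.symm a ha]
        exact hxy (a + p)) (-p) hp
    · rwa [← hT.map_add, ← hT.map_add, neg_add_cancel, hT.map_zero, hT.map_zero] at hd
    · obtain ⟨-, hc0, hcC⟩ := mem_markerSet.1 hc
      by_contra hcon
      push Not at hcon
      refine hsep _ hpC c (mem_latticeBox.2 fun i => ?_) hc0 hcC
      exact abs_le.1 (hcon i).le

/-- Every `f` can be perturbed to a map `g` such that `(I_g, π)` is an `ε`-embedding. -/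
lemma exists_perturbation {k D : ℕ} (hk : 1 ≤ k) {X : Type*} [MetricSpace X] [CompactSpace X]
    {T : (Fin k → ℤ) → X → X} (hT : IsZkAction T)
    {Z : Type*} [MetricSpace Z] [CompactSpace Z] {S : (Fin k → ℤ) → Z → Z} (hS : IsZkAction S)
    (hzerodim : ∀ (z : Z) (U : Set Z), IsOpen U → z ∈ U →
      ∃ W : Set Z, IsClopen W ∧ z ∈ W ∧ W ⊆ U)
    (hfree : ∀ (z : Z) (g : Fin k → ℤ), g ≠ 0 → S g z ≠ z)
    {π : X → Z} (hπcont : Continuous π) (hπequiv : ∀ g x, π (T g x) = S g (π x))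
    (hmdim : mdim X T < (D : ℝ≥0∞) / 2) (f : C(X, Fin D → Icc (0 : ℝ) 1))
    {δ ε : ℝ} (hδ : 0 < δ) (hδ1 : δ ≤ 1) (hε : 0 < ε)
    (hfδ : ∀ x y, dist x y < ε → ∀ d, |(f x d : ℝ) - f y d| < δ) :
    ∃ g : C(X, Fin D → Icc (0 : ℝ) 1), (∀ x d, |(g x d : ℝ) - f x d| < 2 * δ) ∧
      ∀ x y, (∀ n, g (T n x) = g (T n y)) → π x = π y → dist x y < ε := by
  obtain ⟨N, n, m, σ, hσ, φ, F, hN, hn, hF, hFφ, hFε⟩ := exists_block_map T hT hmdim hε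
  obtain ⟨ρ, hρ, hcard⟩ := exists_radius hk hN hn
  have hk' : (1 : ℤ) ≤ k := by exact_mod_cast hk
  have hρ' : (2 : ℤ) < ρ := by exact_mod_cast hρ
  have hR : (0 : ℤ) ≤ 2 * k * ρ := by positivity
  have hM : (ρ : ℤ) ≤ k * (2 * k * ρ) := by nlinarith [mul_le_mul hk' hk' zero_le_one (by linarith)]
  obtain ⟨C, hC, hsep, hcov⟩ := exists_marker hS hzerodim hfree (latticeBox k (2 * k * ρ))
    (mem_latticeBox.2 fun i => by rw [Pi.zero_apply]; constructor <;> linarith)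
    (fun n hn => mem_latticeBox.2 fun i => by
      have := mem_latticeBox.1 hn i
      rw [Pi.neg_apply]
      constructor <;> linarith)
  -- division with remainder places a lattice point in its box
  have hdiv : ∀ a : Fin k → ℤ, ∃ b : Fin k → Fin N,
      a = (fun i => (b i : ℤ)) + fun i => (N : ℤ) * (a i / (N : ℤ)) := by
    intro a
    have hN0 : (0 : ℤ) < N := by exact_mod_cast hN
    refine ⟨fun i => ⟨(a i % (N : ℤ)).toNat, ?_⟩, ?_⟩
    · have := Int.emod_lt_of_pos (a i) hN0
      have := Int.emod_nonneg (a i) hN0.ne'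
      omega
    · funext i
      have h1 := Int.emod_nonneg (a i) hN0.ne'
      have h2 := Int.emod_add_mul_ediv (a i) N
      simp only [Pi.add_apply, Int.toNat_of_nonneg h1]
      exact h2.symm
  have htile : ∀ A : Finset (Fin k → ℤ), ∃ h : (Fin k → ℤ) → X → Fin D → Icc (0 : ℝ) 1,
      (∀ a, Continuous (h a)) ∧ (∀ a x d, |(h a x d : ℝ) - f (T a x) d| < 2 * δ) ∧
      ((∀ c ∈ A, ∃ j, (2 * k * ρ : ℤ) ≤ |c j|) → ∀ x y,
        (∀ a ∈ openCell (k * (2 * k * ρ)) A, h a x = h a y) →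
        ∀ a ∈ closedCell (k * (2 * k * ρ)) A, dist (T a x) (T a y) < ε) := by
    intro A
    by_cases hA : ∀ c ∈ A, ∃ j, (2 * k * ρ : ℤ) ≤ |c j|
    · have hmem : ∀ a ∈ closedCell (k * (2 * k * ρ)) A,
          (fun i => a i / (N : ℤ)) ∈ cellBoxes (k * (2 * k * ρ)) N A := fun a ha =>
        Finset.mem_image_of_mem _ ha
      obtain ⟨h, h1, h2, h3⟩ := exists_tile_map hT φ F hF hFφ hFε _ _ (hcard _ hM A hA)
        (fun a ha => ⟨_, hmem a (openCell_subset_closedCell _ _ ha), hdiv a⟩) f hδ hδ1 hfδ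
      refine ⟨h, h1, h2, fun _ x y hxy a ha => ?_⟩
      obtain ⟨b, hb⟩ := hdiv a
      rw [hb]
      exact h3 x y hxy _ (hmem a ha) b
    · refine ⟨fun a x => f (T a x), fun a => f.continuous.comp (hT.cont a), fun a x d => ?_,
        fun h => absurd h hA⟩
      rw [sub_self, abs_zero]
      linarith
  choose h h1 h2 h3 using htile
  exact exists_glued_map hk hT hS hπcont hπequiv hC hR hsep hcov f hδ h h1 h2 h3

/-! ### The Baire category argument -/

/-- The maps `f` for which `(I_f, π)` is an `ε`-embedding form an open set: the complement is the
projection of a closed set along the compact space `X × X`. -/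
lemma isOpen_epsEmbedding {k D : ℕ} {X : Type*} [MetricSpace X] [CompactSpace X]
    {T : (Fin k → ℤ) → X → X} (hT : IsZkAction T) {Z : Type*} [MetricSpace Z]
    {π : X → Z} (hπcont : Continuous π) (ε : ℝ) :
    IsOpen {f : C(X, Fin D → Icc (0 : ℝ) 1) |
      ∀ x y, (∀ n, f (T n x) = f (T n y)) → π x = π y → dist x y < ε} := by
  rw [← isClosed_compl_iff]
  let E : Set (C(X, Fin D → Icc (0 : ℝ) 1) × X × X) :=
    (⋂ n, {q | q.1 (T n q.2.1) = q.1 (T n q.2.2)}) ∩ {q | π q.2.1 = π q.2.2} ∩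
      {q | ε ≤ dist q.2.1 q.2.2}
  have hE : IsClosed E := by
    refine ((isClosed_iInter fun n => isClosed_eq ?_ ?_).inter
      (isClosed_eq ?_ ?_)).inter (isClosed_le continuous_const ?_)
    · exact continuous_eval.comp (continuous_fst.prodMk
        ((hT.cont n).comp (continuous_fst.comp continuous_snd)))
    · exact continuous_eval.comp (continuous_fst.prodMk
        ((hT.cont n).comp (continuous_snd.comp continuous_snd)))
    · exact hπcont.comp (continuous_fst.comp continuous_snd)
    · exact hπcont.comp (continuous_snd.comp continuous_snd)
    · exact (continuous_fst.comp continuous_snd).dist (continuous_snd.comp continuous_snd)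
  convert isClosedMap_fst_of_compactSpace _ hE
  ext f
  simp only [mem_compl_iff, mem_ofPred_eq, mem_image, Prod.exists]
  push Not
  constructor
  · rintro ⟨x, y, h1, h2, h3⟩
    exact ⟨f, x, y, ⟨⟨Set.mem_iInter.2 h1, h2⟩, h3⟩, rfl⟩
  · rintro ⟨f', x, y, ⟨⟨h1, h2⟩, h3⟩, rfl⟩
    exact ⟨x, y, fun n => Set.mem_iInter.1 h1 n, h2, h3⟩

/-- By compactness, `(I_f, π)` is an embedding as soon as it is an `ε`-embedding for all `ε`. -/
lemma isEmbedding_iff {k D : ℕ} {X : Type*} [MetricSpace X] [CompactSpace X]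
    {T : (Fin k → ℤ) → X → X} (hT : IsZkAction T) {Z : Type*} [MetricSpace Z]
    {π : X → Z} (hπcont : Continuous π) (f : C(X, Fin D → Icc (0 : ℝ) 1)) :
    Topology.IsEmbedding (fun x : X => (((fun n => f (T n x)), π x) :
        ((Fin k → ℤ) → Fin D → Icc (0 : ℝ) 1) × Z)) ↔
      ∀ m : ℕ, ∀ x y, (∀ n, f (T n x) = f (T n y)) → π x = π y →
        dist x y < 1 / ((m : ℝ) + 1) := by
  constructor
  · intro h m x y hxy hπ
    have : x = y := h.injective (Prod.ext (funext hxy) hπ)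
    rw [this, dist_self]
    positivity
  · intro h
    have hcont : Continuous (fun x : X => (((fun n => f (T n x)), π x) :
        ((Fin k → ℤ) → Fin D → Icc (0 : ℝ) 1) × Z)) :=
      (continuous_pi fun n => f.continuous.comp (hT.cont n)).prodMk hπcont
    refine (hcont.isClosedEmbedding fun x y hxy => ?_).isEmbedding
    by_contra hne
    obtain ⟨m, hm⟩ := exists_nat_one_div_lt (dist_pos.2 hne)
    exact lt_asymm hm (h m x y (congrFun (Prod.ext_iff.1 hxy).1) (Prod.ext_iff.1 hxy).2)

/-- **Theorem.** Let `π : X → Z` be a factor map onto an aperiodic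
zero-dimensional `ℤ^k`-system, with `mdim(X) < D/2`. Then the set of
`f ∈ C(X,[0,1]^D)` for which `(I_f, π)` is a topological embedding is a dense
`G_δ` subset of `C(X,[0,1]^D)`. -/
theorem stmt_4 (k D : ℕ) (hk : 1 ≤ k) (hD : 1 ≤ D)
    (X : Type*) [MetricSpace X] [CompactSpace X]
    (T : (Fin k → ℤ) → X → X) (hT : IsZkAction T)
    (Z : Type*) [MetricSpace Z] [CompactSpace Z]
    (S : (Fin k → ℤ) → Z → Z) (hS : IsZkAction S)
    -- zero-dimensional: clopen sets form a basis
    (hzerodim : ∀ (z : Z) (U : Set Z), IsOpen U → z ∈ U →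
      ∃ W : Set Z, IsClopen W ∧ z ∈ W ∧ W ⊆ U)
    -- aperiodic
    (hfree : ∀ (z : Z) (g : Fin k → ℤ), g ≠ 0 → S g z ≠ z)
    (π : X → Z) (hπcont : Continuous π) (hπsurj : Function.Surjective π)
    (hπequiv : ∀ (g : Fin k → ℤ) (x : X), π (T g x) = S g (π x))
    (hmdim : mdim X T < (D : ℝ≥0∞) / 2) :
    Dense {f : C(X, Fin D → Set.Icc (0 : ℝ) 1) |
        Topology.IsEmbedding (fun x : X =>
          (((fun n => f (T n x)), π x) :
            ((Fin k → ℤ) → Fin D → Set.Icc (0 : ℝ) 1) × Z))} ∧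
    IsGδ {f : C(X, Fin D → Set.Icc (0 : ℝ) 1) |
        Topology.IsEmbedding (fun x : X =>
          (((fun n => f (T n x)), π x) :
            ((Fin k → ℤ) → Fin D → Set.Icc (0 : ℝ) 1) × Z))} := by
  set O : ℕ → Set C(X, Fin D → Set.Icc (0 : ℝ) 1) := fun m =>
    {f | ∀ x y, (∀ n, f (T n x) = f (T n y)) → π x = π y → dist x y < 1 / ((m : ℝ) + 1)} with hO
  have hset : {f : C(X, Fin D → Set.Icc (0 : ℝ) 1) |
        Topology.IsEmbedding (fun x : X =>
          (((fun n => f (T n x)), π x) :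
            ((Fin k → ℤ) → Fin D → Set.Icc (0 : ℝ) 1) × Z))} = ⋂ m, O m := by
    ext f
    rw [mem_ofPred_eq, isEmbedding_iff hT hπcont f, Set.mem_iInter]
    rfl
  have hopen : ∀ m, IsOpen (O m) := fun m => isOpen_epsEmbedding hT hπcont _
  have hdense : ∀ m, Dense (O m) := by
    intro m
    rw [Metric.dense_iff]
    intro f r hr
    set δ : ℝ := min 1 (r / 3) with hδdef
    have hδ : 0 < δ := lt_min one_pos (by positivity)
    have hδ1 : δ ≤ 1 := min_le_left _ _
    have hδr : 2 * δ < r := by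
      have : δ ≤ r / 3 := min_le_right _ _
      linarith
    have huc : UniformContinuous f := CompactSpace.uniformContinuous_of_continuous f.continuous
    obtain ⟨ε₀, hε₀, hf⟩ := Metric.uniformContinuous_iff.1 huc δ hδ
    have hε : 0 < min ε₀ (1 / ((m : ℝ) + 1)) := lt_min hε₀ (by positivity)
    obtain ⟨g, hgf, hg⟩ := exists_perturbation hk hT hS hzerodim hfree hπcont hπequiv hmdim f
      hδ hδ1 hε (fun x y hxy d => (dist_le_pi_dist (f x) (f y) d).trans_lt
        (hf (hxy.trans_le (min_le_left _ _))))
    refine ⟨g, ?_, fun x y hxy hπ => (hg x y hxy hπ).trans_le (min_le_right _ _)⟩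
    rw [Metric.mem_ball]
    refine lt_of_le_of_lt ((ContinuousMap.dist_le (by positivity)).2 fun x => ?_) hδr
    exact (dist_pi_le_iff (by positivity)).2 fun d => (hgf x d).le
  rw [hset]
  exact ⟨dense_iInter_of_isOpen_nat hopen hdense, IsGδ.iInter_of_isOpen hopen⟩
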